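/- If β is a real root (i.e. p(β) = 0) belonging to Σ_λ, then the Marsden–Weinstein reduction N(λ,β) is a single point. -/

import Mathlib

open scoped BigOperators

noncomputable section

/-- A quiver with a finite vertex set `I` and a finite arrow set `A`;
`h a` and `t a` are the head and the tail of the arrow `a`. -/
structure FinQuiver where
  I : Type
  [fintypeI : Fintype I]
  [decEqI : DecidableEq I]
  A : Type
  [fintypeA : Fintype A]
  h : A → I
  t : A → I

attribute [instance] FinQuiver.fintypeI FinQuiver.decEqI FinQuiver.fintypeA

namespace FinQuiver

variable (Q : FinQuiver)

/-- Arrows of the double quiver `Q̄` : every arrow `a : i → j` of `Q` (as `Sum.inl a`)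
together with a reverse arrow `a* : j → i` (as `Sum.inr a`). -/
@[reducible] def DA : Type := Q.A ⊕ Q.A

instance : Fintype Q.DA := inferInstanceAs (Fintype (Q.A ⊕ Q.A))

/-- Head of an arrow of the double quiver. -/
@[reducible] def dh : Q.DA → Q.I := fun a => match a with
  | Sum.inl a => Q.h a
  | Sum.inr a => Q.t a

/-- Tail of an arrow of the double quiver. -/
@[reducible] def dt : Q.DA → Q.I := fun a => match a with
  | Sum.inl a => Q.t a
  | Sum.inr a => Q.h a

/-- The symmetric bilinear form
`(α,β) = ∑_{i∈I} 2 α_i β_i − ∑_{a∈Q̄} α_{h(a)} β_{t(a)}` on `ℤ^I`. -/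
def bil (α β : Q.I → ℤ) : ℤ :=
  (∑ i, 2 * α i * β i) - ∑ a : Q.DA, α (Q.dh a) * β (Q.dt a)

/-- `p(α) = 1 − q(α) = 1 − α·α + ∑_{a ∈ Q} α_{t(a)} α_{h(a)}`. -/
def pp (α : Q.I → ℤ) : ℤ :=
  1 - (∑ i, α i * α i) + ∑ a : Q.A, α (Q.t a) * α (Q.h a)

/-- The coordinate vector `ε_i` at a vertex `i`. -/
def ev (i : Q.I) : Q.I → ℤ := fun j => if j = i then 1 else 0

/-- The coordinate vector of a vertex, as a vector of natural numbers. -/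
def evN (i : Q.I) : Q.I → ℕ := fun j => if j = i then 1 else 0

/-- A vertex is loopfree if no arrow has both its head and its tail there. -/
def Loopfree (i : Q.I) : Prop := ∀ a : Q.A, ¬ (Q.h a = i ∧ Q.t a = i)

/-- The reflection `s_i(α) = α − (α,ε_i) ε_i` at a (loopfree) vertex `i`. -/
def refl (i : Q.I) (α : Q.I → ℤ) : Q.I → ℤ := α - Q.bil α (Q.ev i) • Q.ev i

/-- Two vertices are joined by some arrow. -/
def Adj (i j : Q.I) : Prop :=
  ∃ a : Q.A, (Q.h a = i ∧ Q.t a = j) ∨ (Q.h a = j ∧ Q.t a = i)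

/-- The quiver is connected. -/
def Connected : Prop := ∀ i j : Q.I, Relation.ReflTransGen Q.Adj i j

/-- The support of the vector `α` is connected in `Q`. -/
def SuppConnected (α : Q.I → ℤ) : Prop :=
  ∀ i j : Q.I, α i ≠ 0 → α j ≠ 0 →
    Relation.ReflTransGen (fun x y => α x ≠ 0 ∧ α y ≠ 0 ∧ Q.Adj x y) i j

/-- The fundamental region: nonzero nonnegative vectors with connected support
such that `(α, ε_i) ≤ 0` for every vertex `i`. -/
def InFund (α : Q.I → ℤ) : Prop :=
  α ≠ 0 ∧ (∀ i, 0 ≤ α i) ∧ Q.SuppConnected α ∧ ∀ i, Q.bil α (Q.ev i) ≤ 0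

/-- The roots of the Kac root system attached to `Q` : the real roots form the orbit
of the simple roots (coordinate vectors at loopfree vertices) under the reflections at
loopfree vertices, and the imaginary roots form the orbit of `±(fundamental region)`
under these reflections. -/
inductive IsRoot : (Q.I → ℤ) → Prop
  | simple (i : Q.I) (hi : Q.Loopfree i) : IsRoot (Q.ev i)
  | fund (α : Q.I → ℤ) (hα : Q.InFund α) : IsRoot α
  | neg_fund (α : Q.I → ℤ) (hα : Q.InFund α) : IsRoot (-α)
  | reflect (i : Q.I) (hi : Q.Loopfree i) (α : Q.I → ℤ) (hα : IsRoot α) :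
      IsRoot (Q.refl i α)

/-- Positive roots: roots all of whose components are nonnegative. -/
def IsPosRoot (α : Q.I → ℤ) : Prop := Q.IsRoot α ∧ (∀ i, 0 ≤ α i) ∧ α ≠ 0

/-- The Tits form is positive semidefinite. -/
def PosSemidef : Prop := ∀ α : Q.I → ℤ, 0 ≤ Q.bil α α

/-- The Tits form is positive definite. -/
def PosDef : Prop := Q.PosSemidef ∧ ∀ α : Q.I → ℤ, Q.bil α α = 0 → α = 0

/-- Dynkin quivers: connected, with positive definite Tits form. -/
def IsDynkin : Prop := Q.Connected ∧ Q.PosDef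

/-- Extended Dynkin quivers: connected, with positive semidefinite but not
positive definite Tits form. -/
def IsExtDynkin : Prop := Q.Connected ∧ Q.PosSemidef ∧ ¬ Q.PosDef

/-- `δ` is the minimal positive imaginary root of an extended Dynkin quiver:
the minimal nonzero nonnegative vector in the radical of the Tits form. -/
def IsMinImag (δ : Q.I → ℤ) : Prop :=
  (∀ i, 0 ≤ δ i) ∧ δ ≠ 0 ∧ (∀ i, Q.bil δ (Q.ev i) = 0) ∧
    ∀ β : Q.I → ℤ, (∀ i, 0 ≤ β i) → β ≠ 0 → (∀ i, Q.bil β (Q.ev i) = 0) →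
      ∀ i, δ i ≤ β i

/-- The subquiver of `Q` on a subset `S` of vertices and a subset `B` of arrows. -/
def restrict (S : Set Q.I) (B : Set Q.A) (hh : ∀ a ∈ B, Q.h a ∈ S)
    (ht : ∀ a ∈ B, Q.t a ∈ S) : FinQuiver :=
  { I := S
    fintypeI := Fintype.ofFinite S
    decEqI := Classical.decEq _
    A := B
    fintypeA := Fintype.ofFinite B
    h := fun a => ⟨Q.h a.1, hh a.1 a.2⟩
    t := fun a => ⟨Q.t a.1, ht a.1 a.2⟩ }

/-- The support quiver of a vector: the full subquiver on the support of `β`. -/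
def suppQuiver (β : Q.I → ℤ) : FinQuiver :=
  Q.restrict {i | β i ≠ 0} {a | β (Q.h a) ≠ 0 ∧ β (Q.t a) ≠ 0}
    (fun _ ha => ha.1) (fun _ ha => ha.2)

/-- A dimension vector (of natural numbers), viewed in `ℤ^I`. -/
def toZ (α : Q.I → ℕ) : Q.I → ℤ := fun i => (α i : ℤ)

/-- An oriented cycle in the double quiver `Q̄`, consisting of `n+1` arrows,
the tail of each arrow being the head of the (cyclically) next one. -/
structure Cyc (Q' : FinQuiver) where
  n : ℕ
  ar : Fin (n + 1) → Q'.DA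
  compat : ∀ i : Fin (n + 1), Q'.dt (ar i) = Q'.dh (ar (i + 1))

section WithField

variable (K : Type) [Field K]

/-- `λ·α = ∑_i λ_i α_i`. -/
def pair (l : Q.I → K) (α : Q.I → ℤ) : K := ∑ i, l i * (α i : K)

/-- `R_λ^+`, the set of positive roots `α` with `λ·α = 0`. -/
def Rplus (l : Q.I → K) : Set (Q.I → ℤ) :=
  {α | Q.IsPosRoot α ∧ Q.pair K l α = 0}

/-- `ℕ R_λ^+`, the set of sums (including the empty sum `0`) of elements of `R_λ^+`. -/
def NRplus (l : Q.I → K) : Set (Q.I → ℤ) :=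
  (AddSubmonoid.closure (Q.Rplus K l) : AddSubmonoid (Q.I → ℤ))

/-- `Σ_λ` : the elements `α ∈ R_λ^+` with `p(α) > ∑ p(β⁽ᵗ⁾)` for every decomposition
of `α` as a sum of at least two elements `β⁽ᵗ⁾` of `R_λ^+`. -/
def SigmaSet (l : Q.I → K) : Set (Q.I → ℤ) :=
  {α | α ∈ Q.Rplus K l ∧
    ∀ (n : ℕ) (β : Fin n → (Q.I → ℤ)), 2 ≤ n → (∀ j, β j ∈ Q.Rplus K l) →
      α = ∑ j, β j → (∑ j, Q.pp (β j)) < Q.pp α}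

/-- The dual reflection `r_i(λ)_j = λ_j − (ε_i,ε_j) λ_i`. -/
def coRefl (i : Q.I) (l : Q.I → K) : Q.I → K :=
  fun j => l j - (Q.bil (Q.ev i) (Q.ev j) : ℤ) * l i

/-- A single admissible reflection applied to the pair `(λ, α)`:
a reflection at a loopfree vertex `i` with `λ_i ≠ 0`. -/
def AdmStep (x y : (Q.I → K) × (Q.I → ℤ)) : Prop :=
  ∃ i : Q.I, Q.Loopfree i ∧ x.1 i ≠ 0 ∧ y.1 = Q.coRefl K i x.1 ∧ y.2 = Q.refl i x.2

/-- `(ν,β)` is obtained from `(λ,α)` by a sequence of admissible reflections: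
the two pairs lie in the same class of the equivalence relation generated by
admissible reflections. -/
def AdmEquiv (x y : (Q.I → K) × (Q.I → ℤ)) : Prop :=
  Relation.EqvGen (Q.AdmStep K) x y

/-- The space `Rep(Q̄,α)` of representations of the double quiver. -/
def Rep (α : Q.I → ℕ) : Type :=
  ∀ a : Q.DA, Matrix (Fin (α (Q.dh a))) (Fin (α (Q.dt a))) K

/-- The moment map
`μ_α(x)_i = ∑_{a∈Q, h(a)=i} x_a x_{a*} − ∑_{a∈Q, t(a)=i} x_{a*} x_a`. -/
def moment (α : Q.I → ℕ) (x : Q.Rep K α) (i : Q.I) :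
    Matrix (Fin (α i)) (Fin (α i)) K :=
  (∑ a : Q.A, if h : Q.h a = i then
      (x (Sum.inl a) * x (Sum.inr a)).submatrix
        (Fin.cast (congrArg α h).symm) (Fin.cast (congrArg α h).symm)
    else 0)
  - ∑ a : Q.A, if h : Q.t a = i then
      (x (Sum.inr a) * x (Sum.inl a)).submatrix
        (Fin.cast (congrArg α h).symm) (Fin.cast (congrArg α h).symm)
    else 0

/-- The fibre `μ_α^{-1}(λ)` of the moment map over (the central element
corresponding to) `λ`. -/
def MomentFiber (l : Q.I → K) (α : Q.I → ℕ) : Set (Q.Rep K α) :=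
  {x | ∀ i : Q.I, Q.moment K α x i = l i • (1 : Matrix (Fin (α i)) (Fin (α i)) K)}

/-- The group `∏_i GL(α_i,K)`; it acts on `Rep(Q̄,α)` by conjugation, with the same
orbits and the same invariant functions as `G(α) = (∏_i GL(α_i,K))/K^*`. -/
def Gl (α : Q.I → ℕ) : Type := ∀ i : Q.I, Matrix.GeneralLinearGroup (Fin (α i)) K

/-- The conjugation action of `∏_i GL(α_i,K)` on `Rep(Q̄,α)`. -/
def glAct (α : Q.I → ℕ) (g : Q.Gl K α) (x : Q.Rep K α) : Q.Rep K α :=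
  fun a => (g (Q.dh a) : Matrix (Fin (α (Q.dh a))) (Fin (α (Q.dh a))) K) * x a *
    (((g (Q.dt a))⁻¹ : Matrix.GeneralLinearGroup (Fin (α (Q.dt a))) K) :
      Matrix (Fin (α (Q.dt a))) (Fin (α (Q.dt a))) K)

/-- Coordinates on `Rep(Q̄,α)`: matrix entries. -/
def Coords (α : Q.I → ℕ) : Type :=
  Σ a : Q.DA, Fin (α (Q.dh a)) × Fin (α (Q.dt a))

/-- The coordinate ring `K[V]` of a subset `V` of `Rep(Q̄,α)` : the algebra of
`K`-valued functions on `V` which are restrictions of polynomial functions. -/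
def fnRing (α : Q.I → ℕ) (V : Set (Q.Rep K α)) : Subalgebra K (↥V → K) :=
  (MvPolynomial.aeval
    (fun c : Q.Coords α => fun v : ↥V => v.1 c.1 c.2.1 c.2.2) :
    MvPolynomial (Q.Coords α) K →ₐ[K] (↥V → K)).range

end WithField

end FinQuiver

/-- The subalgebra of functions invariant under a relation (e.g. the orbit
relation of a group action). -/
def relInv (K : Type) [Field K] {V : Type} (R : V → V → Prop) :
    Subalgebra K (V → K) where
  carrier := {f | ∀ x y : V, R x y → f x = f y}
  mul_mem' := by
    intro f g hf hg x y hxy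
    simp only [Pi.mul_apply, hf x y hxy, hg x y hxy]
  one_mem' := fun x y _ => rfl
  add_mem' := by
    intro f g hf hg x y hxy
    simp only [Pi.add_apply, hf x y hxy, hg x y hxy]
  zero_mem' := fun x y _ => rfl
  algebraMap_mem' := fun c x y _ => rfl

namespace FinQuiver

variable (Q : FinQuiver) (K : Type) [Field K]

/-- The coordinate ring of the Marsden–Weinstein reduction
`N(λ,α) = μ_α^{-1}(λ) ⫽ G(α)` : the `G(α)`-invariant functions in the coordinate
ring of `μ_α^{-1}(λ)`.  Two such reductions are isomorphic as (affine) varieties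
exactly when these `K`-algebras are isomorphic. -/
def InvRing (l : Q.I → K) (α : Q.I → ℕ) :
    Subalgebra K (↥(Q.MomentFiber K l α) → K) :=
  Q.fnRing K α (Q.MomentFiber K l α) ⊓
    relInv K (fun x y : ↥(Q.MomentFiber K l α) =>
      ∃ g : Q.Gl K α, y.1 = Q.glAct K α g x.1)

/-- Index type for a product `∏_t X_t^{m_t}`. -/
@[reducible] def SymIdx (s : ℕ) (m : Fin s → ℕ) : Type := Σ t : Fin s, Fin (m t)

/-- The product `∏_{t} Rep(Q̄, d_t)^{m_t}` of representation spaces. -/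
def SymRep (s : ℕ) (m : Fin s → ℕ) (d : Fin s → (Q.I → ℕ)) : Type :=
  ∀ p : SymIdx s m, Q.Rep K (d p.1)

/-- The product `∏_t μ_{d_t}^{-1}(λ)^{m_t}` of moment map fibres. -/
def SymFiber (s : ℕ) (m : Fin s → ℕ) (d : Fin s → (Q.I → ℕ)) (l : Q.I → K) :
    Set (Q.SymRep K s m d) :=
  {x | ∀ p : SymIdx s m, x p ∈ Q.MomentFiber K l (d p.1)}

/-- Polynomial functions on the product of fibres. -/
def symFnRing (s : ℕ) (m : Fin s → ℕ) (d : Fin s → (Q.I → ℕ)) (l : Q.I → K) :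
    Subalgebra K (↥(Q.SymFiber K s m d l) → K) :=
  (MvPolynomial.aeval
    (fun c : Σ p : SymIdx s m, Q.Coords (d p.1) =>
      fun v : ↥(Q.SymFiber K s m d l) => v.1 c.1 c.2.1 c.2.2.1 c.2.2.2) :
    MvPolynomial (Σ p : SymIdx s m, Q.Coords (d p.1)) K →ₐ[K]
      (↥(Q.SymFiber K s m d l) → K)).range

/-- The componentwise action of the product of the groups `∏ GL(d_t)^{m_t}`. -/
def symGlAct (s : ℕ) (m : Fin s → ℕ) (d : Fin s → (Q.I → ℕ))
    (g : ∀ p : SymIdx s m, Q.Gl K (d p.1)) (x : Q.SymRep K s m d) :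
    Q.SymRep K s m d :=
  fun p => Q.glAct K (d p.1) (g p) (x p)

/-- The action of `∏_t S_{m_t}` permuting the factors of each `X_t^{m_t}`. -/
def symPermAct (s : ℕ) (m : Fin s → ℕ) (d : Fin s → (Q.I → ℕ))
    (π : ∀ t : Fin s, Equiv.Perm (Fin (m t))) (x : Q.SymRep K s m d) :
    Q.SymRep K s m d :=
  fun p => x ⟨p.1, π p.1 p.2⟩

/-- The coordinate ring of the product of symmetric products
`∏_t S^{m_t} N(λ, d_t)` of Marsden–Weinstein reductions: functions on
`∏_t μ_{d_t}^{-1}(λ)^{m_t}` which are polynomial, invariant under all the groups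
`G(d_t)` acting on the separate factors, and symmetric under permutations of the
`m_t` factors of each type `t`. -/
def SymInvRing (s : ℕ) (m : Fin s → ℕ) (d : Fin s → (Q.I → ℕ)) (l : Q.I → K) :
    Subalgebra K (↥(Q.SymFiber K s m d l) → K) :=
  Q.symFnRing K s m d l ⊓
    relInv K (fun x y : ↥(Q.SymFiber K s m d l) =>
      ∃ g : ∀ p : SymIdx s m, Q.Gl K (d p.1), y.1 = Q.symGlAct K s m d g x.1) ⊓
    relInv K (fun x y : ↥(Q.SymFiber K s m d l) =>
      ∃ π : ∀ t : Fin s, Equiv.Perm (Fin (m t)), y.1 = Q.symPermAct K s m d π x.1)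

/-- The trace function `tr_p` of an oriented cycle `p` in `Q̄` :
`tr_p(x) = tr(x_{a_1} ⋯ x_{a_ℓ})`, written out via matrix entries. -/
def cycTr (α : Q.I → ℕ) (p : Q.Cyc) (x : Q.Rep K α) : K :=
  ∑ c : ∀ i : Fin (p.n + 1), Fin (α (Q.dh (p.ar i))),
    ∏ i : Fin (p.n + 1),
      x (p.ar i) (c i) (Fin.cast (congrArg α (p.compat i)).symm (c (i + 1)))

/-- `U` is a subrepresentation of the `Π^λ`-module given by the point
`x ∈ Rep(Q̄,α)` : a collection of subspaces stable under all the maps `x_a`. -/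
def SubRep (α : Q.I → ℕ) (x : Q.Rep K α)
    (U : ∀ i : Q.I, Submodule K (Fin (α i) → K)) : Prop :=
  ∀ a : Q.DA, ∀ v ∈ U (Q.dt a), (x a).mulVec v ∈ U (Q.dh a)

/-- The module given by `x` has the simple module `S_{i₀}` (dimension vector
`ε_{i₀}`, all arrows acting as zero) as a composition factor: it has a subquotient
of dimension vector `ε_{i₀}` on which all arrows act as zero. -/
def HasSFactor (α : Q.I → ℕ) (i0 : Q.I) (x : Q.Rep K α) : Prop :=
  ∃ U W : ∀ i : Q.I, Submodule K (Fin (α i) → K),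
    Q.SubRep K α x U ∧ Q.SubRep K α x W ∧ (∀ i, U i ≤ W i) ∧
    (∀ i, Module.finrank K (W i) =
      Module.finrank K (U i) + (if i = i0 then 1 else 0)) ∧
    (∀ a : Q.DA, Q.dh a = i0 → Q.dt a = i0 →
      ∀ v ∈ W (Q.dt a), (x a).mulVec v ∈ U (Q.dh a))

/-- `W/U` is a simple subquotient of the module given by `x`; the simple
subquotients of a module are, up to isomorphism, exactly its composition factors. -/
def SimpleSubquot (α : Q.I → ℕ) (x : Q.Rep K α)
    (U W : ∀ i : Q.I, Submodule K (Fin (α i) → K)) : Prop :=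
  Q.SubRep K α x U ∧ Q.SubRep K α x W ∧ (∀ i, U i ≤ W i) ∧ U ≠ W ∧
    ∀ V : ∀ i : Q.I, Submodule K (Fin (α i) → K),
      Q.SubRep K α x V → (∀ i, U i ≤ V i) → (∀ i, V i ≤ W i) → V = U ∨ V = W

/-- The direct sum map `∏_{j=1}^m Rep(Q̄,δ) → Rep(Q̄,mδ)` (block diagonal). -/
def dsMap (δ : Q.I → ℕ) (m : ℕ) (y : Fin m → Q.Rep K δ) :
    Q.Rep K (fun i => m * δ i) :=
  fun a => Matrix.of fun r c =>
    if (finProdFinEquiv.symm r).1 = (finProdFinEquiv.symm c).1 then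
      y (finProdFinEquiv.symm r).1 a (finProdFinEquiv.symm r).2
        (finProdFinEquiv.symm c).2
    else 0

end FinQuiver

/-!
The reflection functor at a loopfree vertex `i` with `λ_i ≠ 0` turns modules over the deformed
preprojective algebra `Π^λ` of dimension vector `α` into modules over `Π^{r_i(λ)}` of dimension
vector `s_i(α)`, and modules whose reflections are isomorphic are isomorphic.

A real root `β ∈ Σ_λ` is not a sum of two or more positive real roots orthogonal to `λ`, and
reflections at vertices with `λ_i ≠ 0` preserve this property. Since `(β,β) = 2`, some vertex `i`
has `(β,ε_i) > 0`. If `λ_i ≠ 0`, then reflecting there makes `β` smaller; if `λ_i = 0`, then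
`β = s_i(β) + (β,ε_i) ε_i` forces `β = ε_i`, the dimension vector of a single module. By induction
there is exactly one `Π^λ`-module of dimension vector `β`. So the fibre of the moment map is a
single orbit, and the invariant functions on it are the constants.

That `s_i(β)` stays positive unless `β = ε_i` follows from the fact that the coordinates of a real
root `γ` have the same sign. For this one takes a weight in `ℝ^I` to which only the real roots `±γ`
are orthogonal: the reflection functors produce a module for this weight, of dimension vector `γ`
or `-γ`.
-/

/-! ### Idempotent endomorphisms -/

section Idempotents

open Module

variable {K V W : Type*} [Field K] [AddCommGroup V] [Module K V] [AddCommGroup W] [Module K W]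

theorem finrank_range_comp_le_swap [FiniteDimensional K W] (f : W →ₗ[K] V) (g : V →ₗ[K] W)
    (hfg : IsIdempotentElem (f ∘ₗ g)) :
    finrank K (f ∘ₗ g).range ≤ finrank K (g ∘ₗ f).range := by
  have hle : (f ∘ₗ g).range ≤ (g ∘ₗ f).range.map f := by
    rintro _ ⟨v, rfl⟩
    exact ⟨(g ∘ₗ f) (g v), ⟨g v, rfl⟩, LinearMap.congr_fun hfg v⟩
  exact (Submodule.finrank_mono hle).trans (Submodule.finrank_map_le f _)

theorem finrank_range_comp_comm [FiniteDimensional K V] [FiniteDimensional K W]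
    (f : W →ₗ[K] V) (g : V →ₗ[K] W) (hfg : IsIdempotentElem (f ∘ₗ g))
    (hgf : IsIdempotentElem (g ∘ₗ f)) :
    finrank K (f ∘ₗ g).range = finrank K (g ∘ₗ f).range :=
  (finrank_range_comp_le_swap f g hfg).antisymm (finrank_range_comp_le_swap g f hgf)

theorem finrank_range_comp_comp_of_comp_eq_id [FiniteDimensional K V] [FiniteDimensional K W]
    {p : End K W} (hp : IsIdempotentElem p) {f : W →ₗ[K] V} {g : V →ₗ[K] W}
    (hgf : g ∘ₗ f = LinearMap.id) : finrank K (f ∘ₗ p ∘ₗ g).range = finrank K p.range := by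
  have hpgf : (p ∘ₗ g) ∘ₗ f = p := by rw [LinearMap.comp_assoc, hgf, LinearMap.comp_id]
  have hidem : IsIdempotentElem (f ∘ₗ p ∘ₗ g) := LinearMap.ext fun v => congrArg f <|
    (congrArg p (LinearMap.congr_fun hgf (p (g v)))).trans (LinearMap.congr_fun hp.eq (g v))
  rw [finrank_range_comp_comm f (p ∘ₗ g) hidem (hpgf.symm ▸ hp), hpgf]

theorem finrank_range_add_of_orthogonal [FiniteDimensional K V] {p q : End K V}
    (hp : IsIdempotentElem p) (hq : IsIdempotentElem q) (hpq : p * q = 0) (hqp : q * p = 0) :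
    finrank K (p + q).range = finrank K p.range + finrank K q.range := by
  have hp' : (p + q) * p = p := by rw [add_mul, hp.eq, hqp, add_zero]
  have hq' : (p + q) * q = q := by rw [add_mul, hq.eq, hpq, zero_add]
  have hsup : (p + q).range = p.range ⊔ q.range := by
    refine le_antisymm ?_ (sup_le ?_ ?_)
    · rintro _ ⟨v, rfl⟩
      exact Submodule.add_mem_sup ⟨v, rfl⟩ ⟨v, rfl⟩
    · rintro _ ⟨v, rfl⟩
      exact ⟨p v, LinearMap.congr_fun hp' v⟩
    · rintro _ ⟨v, rfl⟩
      exact ⟨q v, LinearMap.congr_fun hq' v⟩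
  have hinf : p.range ⊓ q.range = ⊥ := by
    rw [eq_bot_iff]
    rintro v ⟨hv, w, rfl⟩
    rw [← (LinearMap.IsIdempotentElem.mem_range_iff hp).mp hv]
    exact LinearMap.congr_fun hpq w
  rw [hsup, ← Submodule.finrank_sup_add_finrank_inf_eq, hinf, finrank_bot, add_zero]

theorem finrank_range_sum_of_orthogonalIdempotents [FiniteDimensional K V] {ι : Type*}
    {p : ι → End K V} (hp : OrthogonalIdempotents p) (s : Finset ι) :
    finrank K (∑ i ∈ s, p i).range = ∑ i ∈ s, finrank K (p i).range := by
  classical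
  induction s using Finset.induction_on with
  | empty => rw [Finset.sum_empty, Finset.sum_empty, LinearMap.range_zero, finrank_bot]
  | insert i s his ih =>
    have hsi : (∑ j ∈ s, p j) * p i = 0 := by
      rw [Finset.sum_mul]
      exact Finset.sum_eq_zero fun j hj => hp.ortho (ne_of_mem_of_not_mem hj his)
    rw [Finset.sum_insert his, Finset.sum_insert his, ← ih,
      finrank_range_add_of_orthogonal (hp.idem i) hp.isIdempotentElem_sum
        (hp.mul_sum_of_notMem his) hsi]

theorem exists_splitting_of_isIdempotentElem [FiniteDimensional K V] {p : End K V}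
    (hp : IsIdempotentElem p) {n : ℕ} (hn : finrank K p.range = n) :
    ∃ (f : (Fin n → K) →ₗ[K] V) (g : V →ₗ[K] (Fin n → K)), g ∘ₗ f = LinearMap.id ∧ f ∘ₗ g = p := by
  let b := (finBasisOfFinrankEq K p.range hn).equivFun
  refine ⟨p.range.subtype ∘ₗ b.symm.toLinearMap, b.toLinearMap ∘ₗ p.rangeRestrict, ?_, ?_⟩
  · have hfix (v : p.range) : p.rangeRestrict v = v :=
      Subtype.ext ((LinearMap.IsIdempotentElem.mem_range_iff hp).mp v.2)
    refine LinearMap.ext fun v => ?_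
    simp [hfix]
  · ext v
    simp

end Idempotents

section Blocks

variable {K ι : Type*} [CommSemiring K] [DecidableEq ι] {V : ι → Type*}
  [∀ i, AddCommMonoid (V i)] [∀ i, Module K (V i)]

/-- The endomorphism of a product of modules whose only nonzero matrix entry is `f`, in row `i`
and column `j`. -/
def block (i j : ι) : (V j →ₗ[K] V i) →ₗ[K] Module.End K (∀ i, V i) where
  toFun f := LinearMap.single K V i ∘ₗ f ∘ₗ LinearMap.proj j
  map_add' f g := by rw [LinearMap.add_comp, LinearMap.comp_add]
  map_smul' r f := by rw [LinearMap.smul_comp, LinearMap.comp_smul, RingHom.id_apply]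

theorem block_mul_block (i j k : ι) (f : V j →ₗ[K] V i) (g : V k →ₗ[K] V j) :
    block i j f * block j k g = block i k (f ∘ₗ g) := by
  ext1 v
  simp [block]

theorem block_mul_block_of_ne (i m : ι) {j k : ι} (h : j ≠ k) (f : V j →ₗ[K] V i)
    (g : V m →ₗ[K] V k) : block i j f * block k m g = 0 := by
  ext1 v
  simp [block, h]

theorem block_injective (i j : ι) :
    Function.Injective (block i j : (V j →ₗ[K] V i) → Module.End K (∀ i, V i)) := by
  intro f g h
  ext1 v
  simpa [block] using congrFun (LinearMap.congr_fun h (Pi.single j v)) i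

end Blocks

section OrthogonalSplitting

open Module

variable {K V ι : Type*} [Field K] [AddCommGroup V] [Module K V] [DecidableEq ι]

theorem finrank_range_block_self [Finite ι] {W : ι → Type*} [∀ i, AddCommGroup (W i)]
    [∀ i, Module K (W i)] [∀ i, FiniteDimensional K (W i)] {i : ι} {p : End K (W i)}
    (hp : IsIdempotentElem p) :
    finrank K (block (V := W) i i p).range = finrank K p.range :=
  finrank_range_comp_comp_of_comp_eq_id hp (LinearMap.proj_comp_single_same ..)

theorem exists_splitting_of_orthogonalIdempotents [FiniteDimensional K V] [Fintype ι]
    {p : ι → End K V} (hp : OrthogonalIdempotents p) {n : ι → ℕ}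
    (hn : ∀ i, finrank K (p i).range = n i) :
    ∃ (f : (∀ i, Fin (n i) → K) →ₗ[K] V) (g : V →ₗ[K] (∀ i, Fin (n i) → K)), g ∘ₗ f = 1 ∧
      f ∘ₗ g = ∑ i, p i ∧
      ∀ i, g ∘ₗ p i ∘ₗ f = block (V := fun i => Fin (n i) → K) i i LinearMap.id := by
  choose a b hba hab using fun i => exists_splitting_of_isIdempotentElem (hp.idem i) (hn i)
  have hba_apply (i v) : b i (a i v) = v := LinearMap.congr_fun (hba i) v
  have hab_apply (i v) : a i (b i v) = p i v := LinearMap.congr_fun (hab i) v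
  have hsingle (i v) : LinearMap.pi b (a i v) = Pi.single i v := by
    ext1 k
    obtain rfl | hki := eq_or_ne k i
    · rw [Pi.single_eq_same, LinearMap.pi_apply, hba_apply]
    · have hort : p k (p i (a i v)) = 0 := LinearMap.congr_fun (hp.ortho hki) _
      rw [Pi.single_eq_of_ne hki, LinearMap.pi_apply, ← hba_apply k (b k _), hab_apply,
        ← hba_apply i v, hab_apply, hort, map_zero]
  have hgf : LinearMap.pi b ∘ₗ (∑ i, a i ∘ₗ LinearMap.proj i) = 1 := by
    refine LinearMap.ext fun w => ?_
    simp only [LinearMap.comp_apply, LinearMap.sum_apply, map_sum, hsingle, LinearMap.proj_apply,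
      Finset.univ_sum_single, Module.End.one_apply]
  refine ⟨∑ i, a i ∘ₗ LinearMap.proj i, LinearMap.pi b, hgf, ?_, fun i => ?_⟩
  · refine LinearMap.ext fun v => ?_
    simp only [LinearMap.comp_apply, LinearMap.sum_apply, LinearMap.proj_apply,
      LinearMap.pi_apply, hab_apply]
  · refine LinearMap.ext fun w => ?_
    rw [LinearMap.comp_apply, LinearMap.comp_apply, ← hab_apply, hsingle]
    exact congrArg (Pi.single i) (congrFun (LinearMap.congr_fun hgf w) i)

end OrthogonalSplitting

/-! ### Double quivers and the Tits form -/

namespace FinQuiver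

variable {Q : FinQuiver}

section DoubleQuiver

/-- The involution `a ↔ a*` on the arrows of the double quiver. -/
def opp : Q.DA → Q.DA := Sum.swap

/-- The sign with which the product `x_c x_{c*}` enters the moment map at the head of `c`:
`1` on the arrows of `Q`, `-1` on the reverse arrows. -/
def sign : Q.DA → ℤ := Sum.elim 1 (-1)

/-- The arrows of the double quiver with head `j`. -/
abbrev InArrow (Q : FinQuiver) (j : Q.I) : Type := {c : Q.DA // Q.dh c = j}

instance (j : Q.I) : DecidableEq (Q.InArrow j) := Classical.decEq _

@[simp] theorem opp_opp (c : Q.DA) : opp (opp c) = c := Sum.swap_swap c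

@[simp] theorem dh_opp (c : Q.DA) : Q.dh (opp c) = Q.dt c := by cases c <;> rfl

@[simp] theorem dt_opp (c : Q.DA) : Q.dt (opp c) = Q.dh c := by cases c <;> rfl

@[simp] theorem sign_opp (c : Q.DA) : sign (opp c) = -sign c := by cases c <;> rfl

@[simp] theorem sign_mul_self (c : Q.DA) : sign c * sign c = 1 := by cases c <;> rfl

theorem sum_opp {M : Type*} [AddCommMonoid M] (f : Q.DA → M) : ∑ c, f (opp c) = ∑ c, f c :=
  (Equiv.sumComm Q.A Q.A).sum_comp f

theorem Loopfree.dt_ne {i : Q.I} (hi : Q.Loopfree i) {c : Q.DA} (hc : Q.dh c = i) :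
    Q.dt c ≠ i := by
  rcases c with a | a
  · exact fun h => hi a ⟨hc, h⟩
  · exact fun h => hi a ⟨h, hc⟩

theorem sum_inArrow {M : Type*} [AddCommMonoid M] (j : Q.I) (f : Q.DA → M) :
    ∑ b : Q.InArrow j, f b = ∑ c, if Q.dh c = j then f c else 0 := by
  rw [← Finset.sum_filter, Finset.sum_subtype _ (p := fun c => Q.dh c = j) (by simp) f]

end DoubleQuiver

section TitsForm

theorem bil_comm (α β : Q.I → ℤ) : Q.bil α β = Q.bil β α := by
  simp only [bil]
  congr 1
  · exact Finset.sum_congr rfl fun i _ => by ring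
  · rw [← sum_opp]
    exact Finset.sum_congr rfl fun c _ => by rw [dh_opp, dt_opp, mul_comm]

theorem bil_add_left (α β γ : Q.I → ℤ) : Q.bil (α + β) γ = Q.bil α γ + Q.bil β γ := by
  simp only [bil, Pi.add_apply, mul_add, add_mul, Finset.sum_add_distrib]
  ring

theorem bil_smul_left (n : ℤ) (α γ : Q.I → ℤ) : Q.bil (n • α) γ = n • Q.bil α γ := by
  simp only [bil, Pi.smul_apply, smul_eq_mul, mul_sub, Finset.mul_sum]
  congr 1 <;> exact Finset.sum_congr rfl fun _ _ => by ring

variable (Q) in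
/-- The form `Q.bil`, bundled as a bilinear form. -/
def bilForm : LinearMap.BilinForm ℤ (Q.I → ℤ) :=
  LinearMap.mk₂ ℤ Q.bil bil_add_left bil_smul_left
    (fun α β γ => by rw [bil_comm, bil_add_left, bil_comm β, bil_comm γ])
    (fun n α β => by rw [bil_comm, bil_smul_left, bil_comm β])

theorem bilForm_apply (α β : Q.I → ℤ) : Q.bilForm α β = Q.bil α β := rfl

theorem bil_ev_right (α : Q.I → ℤ) (i : Q.I) :
    Q.bil α (Q.ev i) = 2 * α i - ∑ b : Q.InArrow i, α (Q.dt b) := by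
  rw [bil, sum_inArrow i fun c => α (Q.dt c), ← sum_opp]
  simp [ev]

theorem bil_ev_self {i : Q.I} (hi : Q.Loopfree i) : Q.bil (Q.ev i) (Q.ev i) = 2 := by
  have h (b : Q.InArrow i) : Q.ev i (Q.dt b) = 0 := if_neg (hi.dt_ne b.2)
  rw [bil_ev_right, Finset.sum_eq_zero fun b _ => h b]
  simp [ev]

theorem bil_eq_sum_ev (α β : Q.I → ℤ) : Q.bil α β = ∑ i, β i * Q.bil α (Q.ev i) := by
  have hβ : β = ∑ i, β i • Q.ev i := by
    ext j
    simp [ev, Finset.sum_apply]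
  conv_lhs => rw [hβ, ← bilForm_apply, map_sum]
  exact Finset.sum_congr rfl fun i _ => map_smul (Q.bilForm α) _ _

theorem bil_self_nonpos {α : Q.I → ℤ} (hα : 0 ≤ α) (h : ∀ i, Q.bil α (Q.ev i) ≤ 0) :
    Q.bil α α ≤ 0 := by
  rw [bil_eq_sum_ev]
  exact Finset.sum_nonpos fun i _ => mul_nonpos_of_nonneg_of_nonpos (hα i) (h i)

theorem two_mul_pp (α : Q.I → ℤ) : 2 * Q.pp α = 2 - Q.bil α α := by
  simp only [pp, bil, Fintype.sum_sum_type, mul_assoc, ← Finset.mul_sum,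
    mul_comm (α (Q.h _)) (α (Q.t _))]
  ring

theorem loopfree_of_bil_ev_pos {α : Q.I → ℤ} (hα : 0 ≤ α) {i : Q.I}
    (hi : 0 < Q.bil α (Q.ev i)) : Q.Loopfree i := by
  rintro a ⟨hh, ht⟩
  classical
  let b : Q.InArrow i := ⟨Sum.inl a, hh⟩
  let b' : Q.InArrow i := ⟨Sum.inr a, ht⟩
  have hbb' : b ≠ b' := fun h => Sum.inl_ne_inr (congrArg Subtype.val h)
  have hle : α i + α i ≤ ∑ b : Q.InArrow i, α (Q.dt b) := calc
    α i + α i = ∑ c ∈ ({b, b'} : Finset (Q.InArrow i)), α (Q.dt c) := by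
      rw [Finset.sum_pair hbb']
      simp only [b, b', hh, ht]
    _ ≤ _ := Finset.sum_le_sum_of_subset_of_nonneg (Finset.subset_univ _) fun _ _ _ => hα _
  rw [bil_ev_right] at hi
  linarith

end TitsForm

section Reflections

variable {i : Q.I}

/-- The reflection `Q.refl i`, bundled as a linear map. -/
def reflHom (i : Q.I) : (Q.I → ℤ) →ₗ[ℤ] (Q.I → ℤ) :=
  LinearMap.id - (Q.bilForm.flip (Q.ev i)).smulRight (Q.ev i)

theorem refl_neg (i : Q.I) (α : Q.I → ℤ) : Q.refl i (-α) = -Q.refl i α :=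
  map_neg (reflHom i) α

theorem bil_refl_ev (hi : Q.Loopfree i) (α : Q.I → ℤ) :
    Q.bil (Q.refl i α) (Q.ev i) = -Q.bil α (Q.ev i) := by
  simp only [refl, ← bilForm_apply, map_sub, map_smul, LinearMap.sub_apply, LinearMap.smul_apply]
  rw [bilForm_apply (Q.ev i), bil_ev_self hi, smul_eq_mul]
  ring

theorem refl_refl (hi : Q.Loopfree i) (α : Q.I → ℤ) : Q.refl i (Q.refl i α) = α := by
  rw [refl, bil_refl_ev hi, refl, neg_smul, sub_neg_eq_add, sub_add_cancel]

theorem bil_refl (hi : Q.Loopfree i) (α : Q.I → ℤ) :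
    Q.bil (Q.refl i α) (Q.refl i α) = Q.bil α α := by
  have h : Q.bil (Q.refl i α) (Q.refl i α) = Q.bil (Q.refl i α) α
      - Q.bil α (Q.ev i) • Q.bil (Q.refl i α) (Q.ev i) := by
    conv_lhs => enter [3]; rw [refl]
    simp only [← bilForm_apply, map_sub, map_smul]
  have h' : Q.bil (Q.refl i α) α = Q.bil α α - Q.bil α (Q.ev i) • Q.bil (Q.ev i) α := by
    rw [refl]
    simp only [← bilForm_apply, map_sub, map_smul, LinearMap.sub_apply, LinearMap.smul_apply]
  rw [h, h', bil_refl_ev hi, bil_comm (Q.ev i)]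
  simp

theorem refl_apply_of_ne {j : Q.I} (h : j ≠ i) (α : Q.I → ℤ) : Q.refl i α j = α j := by
  simp [refl, ev, h]

theorem refl_apply_self (α : Q.I → ℤ) :
    Q.refl i α i = ∑ b : Q.InArrow i, α (Q.dt b) - α i := by
  simp only [refl, Pi.sub_apply, Pi.smul_apply, bil_ev_right, ev, if_true, smul_eq_mul]
  ring

variable {K : Type} [Field K]

/-- The pairing `α ↦ λ·α`, bundled as an additive map. -/
def pairHom (l : Q.I → K) : (Q.I → ℤ) →+ K :=
  AddMonoidHom.mk' (Q.pair K l) fun α β => by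
    simp [pair, mul_add, Finset.sum_add_distrib]

theorem pairHom_apply (l : Q.I → K) (α : Q.I → ℤ) : pairHom l α = Q.pair K l α := rfl

theorem pair_ev (l : Q.I → K) (i : Q.I) : Q.pair K l (Q.ev i) = l i := by
  simp [pair, ev]

theorem pair_refl (l : Q.I → K) (i : Q.I) (α : Q.I → ℤ) :
    Q.pair K l (Q.refl i α) = Q.pair K l α - Q.bil α (Q.ev i) * l i := by
  rw [← pairHom_apply, refl, map_sub, map_zsmul, pairHom_apply, pairHom_apply, pair_ev,
    zsmul_eq_mul]

theorem pair_coRefl (l : Q.I → K) (i : Q.I) (α : Q.I → ℤ) :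
    Q.pair K (Q.coRefl K i l) α = Q.pair K l (Q.refl i α) := by
  rw [pair_refl, bil_comm, bil_eq_sum_ev]
  simp only [pair, coRefl, sub_mul, Finset.sum_sub_distrib]
  push_cast
  rw [Finset.sum_mul]
  congr 1
  exact Finset.sum_congr rfl fun j _ => by ring

theorem coRefl_self (hi : Q.Loopfree i) (l : Q.I → K) : Q.coRefl K i l i = -l i := by
  rw [coRefl, bil_ev_self hi]
  push_cast
  ring

theorem coRefl_coRefl (hi : Q.Loopfree i) (l : Q.I → K) :
    Q.coRefl K i (Q.coRefl K i l) = l := by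
  funext j
  rw [coRefl, coRefl_self hi, coRefl]
  ring

theorem coRefl_apply_of_ne {j : Q.I} (h : j ≠ i) (l : Q.I → K) :
    Q.coRefl K i l j = l j + ∑ b : Q.InArrow j, if Q.dt b = i then l i else 0 := by
  rw [coRefl, bil_ev_right, ev, if_neg h]
  simp [ev, Finset.sum_ite]

end Reflections

theorem toZ_injective : Function.Injective Q.toZ := fun _ _ h =>
  funext fun i => Int.ofNat_inj.mp (congrFun h i)

theorem toZ_evN (i : Q.I) : Q.toZ (Q.evN i) = Q.ev i := by
  funext j
  simp [toZ, evN, ev]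

end FinQuiver

/-! ### Modules over the deformed preprojective algebra -/

namespace FinQuiver

open Module Matrix

variable {Q : FinQuiver} {K : Type} [Field K]

/-- A module over the deformed preprojective algebra `Π^l` with underlying space `T`: `e j` is the
action of the idempotent of the vertex `j` and `arrow c` that of the arrow `c` of the double
quiver. Vectors of `T` outside `∑ j, (e j).range` play no role. -/
structure PreprojModule (Q : FinQuiver) {K : Type} [Field K] (l : Q.I → K) (T : Type)
    [AddCommGroup T] [Module K T] where
  e : Q.I → End K T
  arrow : Q.DA → End K T
  orthogonal : OrthogonalIdempotents e
  e_mul_arrow : ∀ c, e (Q.dh c) * arrow c = arrow c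
  arrow_mul_e : ∀ c, arrow c * e (Q.dt c) = arrow c
  relation : ∀ j, ∑ b : Q.InArrow j, sign b.1 • (arrow b * arrow (opp b)) = l j • e j

namespace PreprojModule

variable {l : Q.I → K} {T S R : Type} [AddCommGroup T] [Module K T] [AddCommGroup S] [Module K S]
  [AddCommGroup R] [Module K R]

theorem e_mul_arrow_of_eq (d : PreprojModule Q l T) {c : Q.DA} {j : Q.I} (h : Q.dh c = j) :
    d.e j * d.arrow c = d.arrow c := h ▸ d.e_mul_arrow c

theorem arrow_mul_e_of_eq (d : PreprojModule Q l T) {c : Q.DA} {j : Q.I} (h : Q.dt c = j) :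
    d.arrow c * d.e j = d.arrow c := h ▸ d.arrow_mul_e c

theorem arrow_mul_e_of_ne (d : PreprojModule Q l T) {c : Q.DA} {j : Q.I} (h : Q.dt c ≠ j) :
    d.arrow c * d.e j = 0 := by
  rw [← d.arrow_mul_e, mul_assoc, d.orthogonal.ortho h, mul_zero]

theorem e_mul_sum_e (d : PreprojModule Q l T) (i : Q.I) :
    d.e i * ∑ j, d.e j = d.e i :=
  d.orthogonal.mul_sum_of_mem (Finset.mem_univ i)

theorem arrow_mul_sum_e (d : PreprojModule Q l T) (c : Q.DA) :
    d.arrow c * ∑ j, d.e j = d.arrow c := by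
  rw [← d.arrow_mul_e, mul_assoc, d.e_mul_sum_e]

theorem sum_e_mul_e (d : PreprojModule Q l T) (i : Q.I) :
    (∑ j, d.e j) * d.e i = d.e i := by
  simp [Finset.sum_mul, d.orthogonal.mul_eq]

theorem sum_e_mul_arrow (d : PreprojModule Q l T) (c : Q.DA) :
    (∑ j, d.e j) * d.arrow c = d.arrow c := by
  rw [← d.e_mul_arrow, ← mul_assoc, d.sum_e_mul_e]

theorem sum_arrow_arrow_opp_apply (d : PreprojModule Q l T) (j : Q.I) (v : T) :
    ∑ b : Q.InArrow j, sign b.1 • d.arrow b (d.arrow (opp b) v) = l j • d.e j v := by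
  rw [← LinearMap.smul_apply, ← d.relation j, LinearMap.sum_apply]
  rfl

theorem e_arrow_apply (d : PreprojModule Q l T) {c : Q.DA} {j : Q.I} (h : Q.dh c = j) (v : T) :
    d.e j (d.arrow c v) = d.arrow c v := LinearMap.congr_fun (d.e_mul_arrow_of_eq h) v

theorem arrow_e_apply (d : PreprojModule Q l T) {c : Q.DA} {j : Q.I} (h : Q.dt c = j) (v : T) :
    d.arrow c (d.e j v) = d.arrow c v := LinearMap.congr_fun (d.arrow_mul_e_of_eq h) v

theorem arrow_e_apply_of_ne (d : PreprojModule Q l T) {c : Q.DA} {j : Q.I} (h : Q.dt c ≠ j)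
    (v : T) : d.arrow c (d.e j v) = 0 := LinearMap.congr_fun (d.arrow_mul_e_of_ne h) v

theorem e_e_apply_of_ne (d : PreprojModule Q l T) {j k : Q.I} (h : j ≠ k) (v : T) :
    d.e j (d.e k v) = 0 := LinearMap.congr_fun (d.orthogonal.ortho h) v

theorem e_e_apply (d : PreprojModule Q l T) (j : Q.I) (v : T) :
    d.e j (d.e j v) = d.e j v := LinearMap.congr_fun (d.orthogonal.idem j).eq v

/-- The dimension vector `j ↦ dim e_j T`. -/
def dimVec (d : PreprojModule Q l T) (j : Q.I) : ℕ := finrank K (d.e j).range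

/-- Linear maps commuting with the action of `Π^l`. -/
structure IsHom (d : PreprojModule Q l T) (s : PreprojModule Q l S) (F : T →ₗ[K] S) : Prop where
  comm_e : ∀ j, F ∘ₗ d.e j = s.e j ∘ₗ F
  comm_arrow : ∀ c, F ∘ₗ d.arrow c = s.arrow c ∘ₗ F

/-- There is a `Π^l`-homomorphism from `d` to `s` which is injective on every `e_j T`. Between
finite-dimensional modules of the same dimension vector this is the relation of isomorphism. -/
def Embeds (d : PreprojModule Q l T) (s : PreprojModule Q l S) : Prop :=
  ∃ F, IsHom d s F ∧ ∀ j v, F (d.e j v) = 0 → d.e j v = 0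

theorem Embeds.trans {d : PreprojModule Q l T} {s : PreprojModule Q l S}
    {r : PreprojModule Q l R} : Embeds d s → Embeds s r → Embeds d r := by
  rintro ⟨F, hF, hFinj⟩ ⟨G, hG, hGinj⟩
  refine ⟨G ∘ₗ F, ⟨fun j => ?_, fun c => ?_⟩, fun j v hv => hFinj j v ?_⟩
  · rw [LinearMap.comp_assoc, hF.comm_e, ← LinearMap.comp_assoc, hG.comm_e, LinearMap.comp_assoc]
  · rw [LinearMap.comp_assoc, hF.comm_arrow, ← LinearMap.comp_assoc, hG.comm_arrow,
      LinearMap.comp_assoc]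
  · have hcomm : F (d.e j v) = s.e j (F v) := LinearMap.congr_fun (hF.comm_e j) v
    rw [LinearMap.comp_apply, hcomm] at hv
    rw [hcomm, hGinj j _ hv]

theorem embeds_of_conj {d : PreprojModule Q l T} {s : PreprojModule Q l S} {A : S →ₗ[K] T}
    {B : T →ₗ[K] S} (hBA : B ∘ₗ A = 1) (hAB : A ∘ₗ B = ∑ j, d.e j)
    (he : ∀ j, B ∘ₗ d.e j ∘ₗ A = s.e j) (harrow : ∀ c, B ∘ₗ d.arrow c ∘ₗ A = s.arrow c) :
    s.Embeds d ∧ d.Embeds s := by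
  have hA (f : End K T) (hf : (∑ j, d.e j) * f = f) : A ∘ₗ B ∘ₗ f ∘ₗ A = f ∘ₗ A := by
    conv_rhs => rw [← hf, ← hAB]
    rfl
  have hB (f : End K T) (hf : f * (∑ j, d.e j) = f) : B ∘ₗ f = (B ∘ₗ f ∘ₗ A) ∘ₗ B := by
    conv_lhs => rw [← hf, ← hAB]
    rfl
  refine ⟨⟨A, ⟨fun j => ?_, fun c => ?_⟩, fun j v hv => ?_⟩,
    ⟨B, ⟨fun j => ?_, fun c => ?_⟩, fun j v hv => ?_⟩⟩
  · rw [← he, hA _ (d.sum_e_mul_e j)]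
  · rw [← harrow, hA _ (d.sum_e_mul_arrow c)]
  · simpa [hv] using (LinearMap.congr_fun hBA (s.e j v)).symm
  · rw [← he, ← hB _ (d.e_mul_sum_e j)]
  · rw [← harrow, ← hB _ (d.arrow_mul_sum_e c)]
  · rw [← d.sum_e_mul_e, ← hAB]
    exact (congrArg A hv).trans (map_zero A)

end PreprojModule

section Representations

variable {α : Q.I → ℕ} {l : Q.I → K}

/-- The total space `⨁ K^{α_j}` of the representations of dimension vector `α`. -/
abbrev Total (K : Type) (α : Q.I → ℕ) : Type := ∀ j, Fin (α j) → K

/-- The projection of the total space onto its summand at the vertex `j`. -/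
def vertexProj (K : Type) [Field K] (α : Q.I → ℕ) (j : Q.I) : End K (Total K α) :=
  block j j LinearMap.id

/-- The endomorphism of the total space given by the matrix of the arrow `c`. -/
def arrowMap (x : Q.Rep K α) (c : Q.DA) : End K (Total K α) :=
  block (V := fun j => Fin (α j) → K) (Q.dh c) (Q.dt c) (Matrix.toLin' (x c))

theorem vertexProj_mul_arrowMap (x : Q.Rep K α) (c : Q.DA) :
    vertexProj K α (Q.dh c) * arrowMap x c = arrowMap x c := block_mul_block ..

theorem arrowMap_mul_vertexProj (x : Q.Rep K α) (c : Q.DA) :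
    arrowMap x c * vertexProj K α (Q.dt c) = arrowMap x c := block_mul_block ..

theorem orthogonalIdempotents_vertexProj : OrthogonalIdempotents (vertexProj K α) where
  idem _ := block_mul_block ..
  ortho _ _ h := block_mul_block_of_ne _ _ h _ _

theorem block_toLin'_submatrix_cast {j k : Q.I} (h : k = j)
    (M : Matrix (Fin (α k)) (Fin (α k)) K) :
    block (V := fun j => Fin (α j) → K) j j (Matrix.toLin' (M.submatrix
      (Fin.cast (congrArg α h).symm) (Fin.cast (congrArg α h).symm))) =
    block (V := fun j => Fin (α j) → K) k k (Matrix.toLin' M) := by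
  subst h
  rfl

theorem sum_arrowMap_mul_arrowMap_opp (x : Q.Rep K α) (j : Q.I) :
    ∑ b : Q.InArrow j, sign b.1 • (arrowMap x b * arrowMap x (opp b)) =
      block (V := fun j => Fin (α j) → K) j j (Matrix.toLin' (Q.moment K α x j)) := by
  have hmul (c : Q.DA) : arrowMap x c * arrowMap x (opp c) =
      block (V := fun j => Fin (α j) → K) (Q.dh c) (Q.dh c) (Matrix.toLin' (
        match c with
        | Sum.inl a => x (Sum.inl a) * x (Sum.inr a)
        | Sum.inr a => x (Sum.inr a) * x (Sum.inl a))) := by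
    rcases c with a | a <;>
    · rw [Matrix.toLin'_mul]
      exact block_mul_block ..
  rw [sum_inArrow j fun c => sign c • (arrowMap x c * arrowMap x (opp c)), Fintype.sum_sum_type,
    moment, map_sub, map_sub, sub_eq_add_neg]
  simp only [map_sum, ← Finset.sum_neg_distrib, hmul]
  congr 1 <;> refine Finset.sum_congr rfl fun a _ => ?_
  · split_ifs with h
    · rw [block_toLin'_submatrix_cast h]
      simp [sign]
    · simp
  · split_ifs with h
    · rw [block_toLin'_submatrix_cast h]
      simp [sign]
    · simp

theorem mem_momentFiber_iff (x : Q.Rep K α) : x ∈ Q.MomentFiber K l α ↔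
    ∀ j, ∑ b : Q.InArrow j, sign b.1 • (arrowMap x b * arrowMap x (opp b)) =
      l j • vertexProj K α j := by
  refine forall_congr' fun j => ?_
  have hscalar : l j • vertexProj K α j =
      block (V := fun j => Fin (α j) → K) j j (Matrix.toLin' (l j • 1)) := by
    rw [map_smul, map_smul, Matrix.toLin'_one, vertexProj]
  rw [sum_arrowMap_mul_arrowMap_opp, hscalar, (block_injective j j).eq_iff,
    Matrix.toLin'.injective.eq_iff]

/-- The `Π^l`-module given by a point of the fibre of the moment map. -/
def moduleOf (x : Q.Rep K α) (hx : x ∈ Q.MomentFiber K l α) :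
    PreprojModule Q l (Total K α) where
  e := vertexProj K α
  arrow := arrowMap x
  orthogonal := orthogonalIdempotents_vertexProj
  e_mul_arrow := vertexProj_mul_arrowMap x
  arrow_mul_e := arrowMap_mul_vertexProj x
  relation := (mem_momentFiber_iff x).mp hx

theorem dimVec_moduleOf {x : Q.Rep K α} (hx : x ∈ Q.MomentFiber K l α) :
    (moduleOf x hx).dimVec = α := by
  funext j
  have h : finrank K (vertexProj K α j).range = _ :=
    finrank_range_block_self (W := fun j => Fin (α j) → K) IsIdempotentElem.one
  rwa [LinearMap.range_id, finrank_top, finrank_fin_fun] at h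

theorem exists_glAct_eq_of_embeds {x y : Q.Rep K α} {hx : x ∈ Q.MomentFiber K l α}
    {hy : y ∈ Q.MomentFiber K l α} :
    (moduleOf x hx).Embeds (moduleOf y hy) → ∃ g, y = Q.glAct K α g x := by
  rintro ⟨F, hF, hinj⟩
  let f (j : Q.I) : Matrix (Fin (α j)) (Fin (α j)) K := LinearMap.toMatrix'
    (LinearMap.proj j ∘ₗ F ∘ₗ LinearMap.single K (fun j => Fin (α j) → K) j)
  have hFsingle (j : Q.I) (v : Fin (α j) → K) : F (Pi.single j v) = Pi.single j (f j *ᵥ v) := by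
    have h := LinearMap.congr_fun (hF.comm_e j) (Pi.single j v)
    simpa [moduleOf, vertexProj, block, f, ← Matrix.toLin'_apply] using h
  have hcomm (c : Q.DA) : f (Q.dh c) * x c = y c * f (Q.dt c) := by
    refine Matrix.toLin'.injective (LinearMap.ext fun v => ?_)
    have h := LinearMap.congr_fun (hF.comm_arrow c) (Pi.single (Q.dt c) v)
    simpa [moduleOf, arrowMap, block, hFsingle] using h
  have hunit (j : Q.I) : IsUnit (f j) := by
    rw [← Matrix.mulVec_injective_iff_isUnit]
    refine (injective_iff_map_eq_zero (Matrix.toLin' (f j))).mpr fun v hv => ?_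
    have h := hinj j (Pi.single j v)
    simpa [moduleOf, vertexProj, block, hFsingle, ← Matrix.toLin'_apply, hv] using h
  refine ⟨fun j => (hunit j).unit, funext fun c => ?_⟩
  change y c = f (Q.dh c) * x c * _
  rw [hcomm, Matrix.mul_assoc]
  exact (Matrix.mul_one _).symm.trans (congrArg _ (hunit _).mul_val_inv.symm)

theorem vertexProj_mul_mul_vertexProj (i j : Q.I) (M : End K (Total K α)) :
    vertexProj K α i * M * vertexProj K α j = block (V := fun j => Fin (α j) → K) i j
      (LinearMap.proj i ∘ₗ M ∘ₗ LinearMap.single K (fun j => Fin (α j) → K) j) :=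
  rfl

variable {T : Type} [AddCommGroup T] [Module K T]

theorem PreprojModule.exists_moduleOf_embeds [FiniteDimensional K T] (d : PreprojModule Q l T)
    (hd : d.dimVec = α) : ∃ (x : Q.Rep K α) (hx : x ∈ Q.MomentFiber K l α),
      (moduleOf x hx).Embeds d ∧ d.Embeds (moduleOf x hx) := by
  subst hd
  obtain ⟨A, B, hBA, hAB, he⟩ := exists_splitting_of_orthogonalIdempotents d.orthogonal
    (n := d.dimVec) fun _ => rfl
  have hconj (f g : End K T) (hf : f * (∑ j, d.e j) = f) :
      (B ∘ₗ f ∘ₗ A) * (B ∘ₗ g ∘ₗ A) = B ∘ₗ (f * g) ∘ₗ A := by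
    conv_rhs => rw [← hf, ← hAB]
    rfl
  let x : Q.Rep K d.dimVec := fun c => LinearMap.toMatrix' (LinearMap.proj (Q.dh c) ∘ₗ
    (B ∘ₗ d.arrow c ∘ₗ A) ∘ₗ LinearMap.single K (fun j => Fin (d.dimVec j) → K) (Q.dt c))
  have harrow (c : Q.DA) : arrowMap x c = B ∘ₗ d.arrow c ∘ₗ A := by
    rw [arrowMap, Matrix.toLin'_toMatrix', ← vertexProj_mul_mul_vertexProj, vertexProj,
      vertexProj, ← he, ← he, hconj _ _ (d.e_mul_sum_e _), d.e_mul_arrow,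
      hconj _ _ (d.arrow_mul_sum_e c), d.arrow_mul_e]
  have hx : x ∈ Q.MomentFiber K l d.dimVec := by
    refine (mem_momentFiber_iff x).mpr fun j => ?_
    have hrel := congrArg (LinearMap.compRight K B ∘ₗ LinearMap.lcomp K T A) (d.relation j)
    simp only [map_sum, map_zsmul, map_smul, LinearMap.comp_apply, LinearMap.lcomp_apply',
      LinearMap.compRight_apply, ← hconj _ _ (d.arrow_mul_sum_e _), ← harrow, he] at hrel
    exact hrel
  exact ⟨x, hx, embeds_of_conj hBA hAB he fun c => (harrow c).symm⟩

end Representations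

end FinQuiver

/-! ### Reflection functors -/

namespace FinQuiver

open Module

variable {Q : FinQuiver} {K : Type} [Field K]

namespace PreprojModule

variable {l : Q.I → K} {T S : Type} [AddCommGroup T] [Module K T] [AddCommGroup S] [Module K S]

section Reflection

variable (d : PreprojModule Q l T) (i : Q.I)

/-- The map `T → ⨁ T`, the sum being over the arrows `b` with head `i`, with the signed actions
of the arrows `b*` as components. -/
def toNeighbours : T →ₗ[K] (Q.InArrow i → T) :=
  LinearMap.pi fun b => sign b.1 • d.arrow (opp b)

/-- The map `⨁ T → T` whose components are the actions of the arrows `b` with head `i`. -/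
def fromNeighbours : (Q.InArrow i → T) →ₗ[K] T :=
  ∑ b : Q.InArrow i, d.arrow b ∘ₗ LinearMap.proj b

/-- The projection of `⨁ T` onto its subspace `⨁ e_{t(b)} T`, over the arrows `b` with
head `i`. -/
def neighbourProj : End K (Q.InArrow i → T) :=
  ∑ b : Q.InArrow i, block b b (d.e (Q.dt b))

/-- The projection of `⨁ T` onto the image of `toNeighbours`, provided that `l i ≠ 0`. -/
def imageProj : End K (Q.InArrow i → T) := (l i)⁻¹ • (d.toNeighbours i ∘ₗ d.fromNeighbours i)

/-- The projection of `⨁ T` onto the kernel of `fromNeighbours` in `⨁ e_{t(b)} T`, provided that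
`l i ≠ 0`. -/
def kernelProj : End K (Q.InArrow i → T) :=
  d.neighbourProj i - d.imageProj i

theorem neighbourProj_apply (w : Q.InArrow i → T) (b : Q.InArrow i) :
    d.neighbourProj i w b = d.e (Q.dt b) (w b) := by
  simp [neighbourProj, block, LinearMap.sum_apply, Finset.sum_apply, Pi.single_apply]

theorem fromNeighbours_apply (w : Q.InArrow i → T) :
    d.fromNeighbours i w = ∑ b, d.arrow b.1 (w b) := by
  simp [fromNeighbours, LinearMap.sum_apply]

theorem toNeighbours_apply (v : T) (b : Q.InArrow i) :
    d.toNeighbours i v b = sign b.1 • d.arrow (opp b.1) v := rfl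

theorem fromNeighbours_comp_toNeighbours :
    d.fromNeighbours i ∘ₗ d.toNeighbours i = l i • d.e i := by
  rw [← d.relation i]
  ext v
  simp [fromNeighbours_apply, toNeighbours_apply, LinearMap.sum_apply]

theorem e_comp_fromNeighbours : d.e i ∘ₗ d.fromNeighbours i = d.fromNeighbours i := by
  refine LinearMap.ext fun w => ?_
  rw [LinearMap.comp_apply, fromNeighbours_apply, map_sum]
  exact Finset.sum_congr rfl fun b _ => LinearMap.congr_fun (d.e_mul_arrow_of_eq b.2) _

theorem fromNeighbours_comp_neighbourProj :
    d.fromNeighbours i ∘ₗ d.neighbourProj i = d.fromNeighbours i := by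
  refine LinearMap.ext fun w => ?_
  simp only [LinearMap.comp_apply, fromNeighbours_apply, neighbourProj_apply]
  exact Finset.sum_congr rfl fun b _ => LinearMap.congr_fun (d.arrow_mul_e b.1) _

theorem neighbourProj_comp_toNeighbours :
    d.neighbourProj i ∘ₗ d.toNeighbours i = d.toNeighbours i := by
  refine LinearMap.ext fun v => funext fun b => ?_
  rw [LinearMap.comp_apply, neighbourProj_apply, toNeighbours_apply, map_zsmul]
  exact congrArg (sign b.1 • ·)
    (LinearMap.congr_fun (d.e_mul_arrow_of_eq (dh_opp b.1)) v)

theorem orthogonalIdempotents_block_e :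
    OrthogonalIdempotents fun b : Q.InArrow i => block (V := fun _ => T) b b (d.e (Q.dt b)) where
  idem b := (block_mul_block ..).trans (congrArg (block b b) (d.orthogonal.idem _).eq)
  ortho _ _ h := block_mul_block_of_ne _ _ h _ _

theorem isIdempotentElem_neighbourProj : IsIdempotentElem (d.neighbourProj i) :=
  (d.orthogonalIdempotents_block_e i).isIdempotentElem_sum

theorem isIdempotentElem_imageProj (hl : l i ≠ 0) : IsIdempotentElem (d.imageProj i) := by
  have h : d.fromNeighbours i ∘ₗ d.toNeighbours i ∘ₗ d.fromNeighbours i =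
      l i • d.fromNeighbours i := by
    rw [← LinearMap.comp_assoc, d.fromNeighbours_comp_toNeighbours, LinearMap.smul_comp,
      d.e_comp_fromNeighbours]
  rw [IsIdempotentElem, Module.End.mul_eq_comp, imageProj, LinearMap.smul_comp,
    LinearMap.comp_smul, LinearMap.comp_assoc, h, LinearMap.comp_smul, inv_smul_smul₀ hl]

theorem neighbourProj_mul_imageProj : d.neighbourProj i * d.imageProj i = d.imageProj i := by
  rw [imageProj, Module.End.mul_eq_comp, LinearMap.comp_smul, ← LinearMap.comp_assoc,
    neighbourProj_comp_toNeighbours]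

theorem imageProj_mul_neighbourProj : d.imageProj i * d.neighbourProj i = d.imageProj i := by
  rw [imageProj, Module.End.mul_eq_comp, LinearMap.smul_comp, LinearMap.comp_assoc,
    fromNeighbours_comp_neighbourProj]

theorem neighbourProj_mul_kernelProj : d.neighbourProj i * d.kernelProj i = d.kernelProj i := by
  rw [kernelProj, mul_sub, d.isIdempotentElem_neighbourProj i, neighbourProj_mul_imageProj]

theorem kernelProj_mul_neighbourProj : d.kernelProj i * d.neighbourProj i = d.kernelProj i := by
  rw [kernelProj, sub_mul, d.isIdempotentElem_neighbourProj i, imageProj_mul_neighbourProj]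

theorem isIdempotentElem_kernelProj (hl : l i ≠ 0) : IsIdempotentElem (d.kernelProj i) :=
  (d.isIdempotentElem_imageProj i hl).sub (d.isIdempotentElem_neighbourProj i)
    (d.imageProj_mul_neighbourProj i) (d.neighbourProj_mul_imageProj i)

theorem kernelProj_single_apply (b c : Q.InArrow i) (v : T) :
    d.kernelProj i (Pi.single c v) b = (if b = c then d.e (Q.dt b) v else 0) -
      (l i)⁻¹ • sign b.1 • d.arrow (opp b) (d.arrow c v) := by
  have hfrom : d.fromNeighbours i (Pi.single c v) = d.arrow c v := by
    rw [fromNeighbours_apply, Finset.sum_eq_single c]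
    · rw [Pi.single_eq_same]
    · intro b _ hb
      rw [Pi.single_eq_of_ne hb, map_zero]
    · simp
  simp only [kernelProj, imageProj, LinearMap.sub_apply, Pi.sub_apply, neighbourProj_apply,
    LinearMap.smul_apply, Pi.smul_apply, LinearMap.comp_apply, toNeighbours_apply, hfrom,
    Pi.single_apply]
  rw [apply_ite (d.e _), map_zero]

/-- The idempotents of the reflected module: the space at `i` is replaced by the range of
`kernelProj`. -/
def reflectE (j : Q.I) : End K (T × (Q.InArrow i → T)) :=
  if j = i then LinearMap.prodMap 0 (d.kernelProj i) else LinearMap.prodMap (d.e j) 0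

/-- The arrows of the reflected module: those with tail `i` act by the inclusion of the range of
`kernelProj`, those with head `i` by a multiple of the projection onto it. -/
def reflectArrow (c : Q.DA) : End K (T × (Q.InArrow i → T)) :=
  if h : Q.dh c = i then
    LinearMap.inr K T _ ∘ₗ (-l i • d.kernelProj i ∘ₗ LinearMap.single K _ ⟨c, h⟩) ∘ₗ
      LinearMap.fst K T _
  else if h : Q.dh (opp c) = i then
    LinearMap.inl K T _ ∘ₗ (sign (opp c) • LinearMap.proj ⟨opp c, h⟩ ∘ₗ d.kernelProj i) ∘ₗ
      LinearMap.snd K T _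
  else LinearMap.prodMap (d.arrow c) 0

theorem reflectE_self : d.reflectE i i = LinearMap.prodMap 0 (d.kernelProj i) := if_pos rfl

variable {i} in
theorem reflectE_of_ne {j : Q.I} (h : j ≠ i) :
    d.reflectE i j = LinearMap.prodMap (d.e j) 0 := if_neg h

theorem reflectArrow_apply (b : Q.InArrow i) (v : T × (Q.InArrow i → T)) :
    d.reflectArrow i b v = (0, -l i • d.kernelProj i (Pi.single b v.1)) := by
  rw [reflectArrow, dif_pos b.2]
  rfl

variable {i} in
theorem reflectArrow_opp_apply (hi : Q.Loopfree i) (b : Q.InArrow i)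
    (v : T × (Q.InArrow i → T)) :
    d.reflectArrow i (opp b) v = (sign b.1 • d.kernelProj i v.2 b, 0) := by
  have hne : Q.dh (opp b) ≠ i := dh_opp b.1 ▸ hi.dt_ne b.2
  have heq : Q.dh (opp (opp b.1)) = i := (opp_opp b.1).symm ▸ b.2
  have hb : (⟨opp (opp b), heq⟩ : Q.InArrow i) = b := Subtype.ext (opp_opp b.1)
  rw [reflectArrow, dif_neg hne, dif_pos heq, hb, opp_opp]
  rfl

variable {i} in
theorem reflectArrow_of_ne {c : Q.DA} (hh : Q.dh c ≠ i) (ht : Q.dt c ≠ i) :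
    d.reflectArrow i c = LinearMap.prodMap (d.arrow c) 0 := by
  rw [reflectArrow, dif_neg hh, dif_neg (dh_opp c ▸ ht)]

variable {i} in
theorem reflectArrow_opp_mul_reflectArrow (hi : Q.Loopfree i) (hl : l i ≠ 0)
    (b c : Q.InArrow i) : d.reflectArrow i (opp b) * d.reflectArrow i c =
      LinearMap.prodMap (d.arrow (opp b) * d.arrow c -
        if b = c then sign b.1 • l i • d.e (Q.dt b) else 0) 0 := by
  refine LinearMap.ext fun v => ?_
  rw [Module.End.mul_apply, reflectArrow_apply, d.reflectArrow_opp_apply hi]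
  refine Prod.ext ?_ rfl
  have hidem := LinearMap.congr_fun (d.isIdempotentElem_kernelProj i hl) (Pi.single c v.1)
  rw [Module.End.mul_apply] at hidem
  simp only [map_smul, hidem, Pi.smul_apply, kernelProj_single_apply]
  have hsign : sign b.1 • -l i • (l i)⁻¹ • sign b.1 • d.arrow (opp b) (d.arrow c v.1) =
      -d.arrow (opp b) (d.arrow c v.1) := by
    rw [smul_comm _ (sign b.1), smul_comm _ (sign b.1), smul_smul (sign b.1), sign_mul_self,
      one_smul, neg_smul, smul_inv_smul₀ hl]
  rw [smul_sub, smul_sub, hsign]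
  split_ifs <;> simp [sub_eq_add_neg, add_comm, smul_comm (l i)]

theorem isIdempotentElem_reflectE (hl : l i ≠ 0) (j : Q.I) :
    IsIdempotentElem (d.reflectE i j) := by
  rcases eq_or_ne j i with rfl | hj
  · rw [reflectE_self, IsIdempotentElem, LinearMap.prodMap_mul,
      (d.isIdempotentElem_kernelProj j hl).eq, zero_mul]
  · rw [d.reflectE_of_ne hj, IsIdempotentElem, LinearMap.prodMap_mul,
      (d.orthogonal.idem j).eq, zero_mul]

theorem reflectE_mul_reflectE_of_ne {j k : Q.I} (h : j ≠ k) :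
    d.reflectE i j * d.reflectE i k = 0 := by
  rcases eq_or_ne j i with rfl | hj
  · rw [reflectE_self, d.reflectE_of_ne h.symm, LinearMap.prodMap_mul, zero_mul, mul_zero,
      LinearMap.prodMap_zero]
  rcases eq_or_ne k i with rfl | hk
  · rw [reflectE_self, d.reflectE_of_ne h, LinearMap.prodMap_mul, zero_mul, mul_zero,
      LinearMap.prodMap_zero]
  · rw [d.reflectE_of_ne hj, d.reflectE_of_ne hk, LinearMap.prodMap_mul, zero_mul,
      d.orthogonal.ortho h, LinearMap.prodMap_zero]

theorem kernelProj_apply_eq_e (w : Q.InArrow i → T) (b : Q.InArrow i) :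
    d.e (Q.dt b) (d.kernelProj i w b) = d.kernelProj i w b := by
  rw [← neighbourProj_apply, ← Module.End.mul_apply, neighbourProj_mul_kernelProj]

theorem kernelProj_single_e (b : Q.InArrow i) (v : T) :
    d.kernelProj i (Pi.single b (d.e (Q.dt b) v)) = d.kernelProj i (Pi.single b v) := by
  have h : Pi.single b (d.e (Q.dt b) v) = d.neighbourProj i (Pi.single b v) := by
    refine funext fun c => ?_
    rw [neighbourProj_apply]
    rcases eq_or_ne c b with rfl | hc
    · rw [Pi.single_eq_same, Pi.single_eq_same]
    · rw [Pi.single_eq_of_ne hc, Pi.single_eq_of_ne hc, map_zero]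
  rw [h, ← Module.End.mul_apply, kernelProj_mul_neighbourProj]

variable {i} in
theorem reflectE_mul_reflectArrow (hi : Q.Loopfree i) (hl : l i ≠ 0) (c : Q.DA) :
    d.reflectE i (Q.dh c) * d.reflectArrow i c = d.reflectArrow i c := by
  by_cases hh : Q.dh c = i
  · refine LinearMap.ext fun v => ?_
    lift c to Q.InArrow i using hh
    have hidem := LinearMap.congr_fun (d.isIdempotentElem_kernelProj i hl) (Pi.single c v.1)
    rw [Module.End.mul_apply] at hidem
    simp [c.2, reflectE_self, reflectArrow_apply, hidem]
  by_cases ht : Q.dt c = i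
  · refine LinearMap.ext fun v => ?_
    obtain ⟨b, rfl⟩ : ∃ b : Q.InArrow i, c = opp b :=
      ⟨⟨opp c, dh_opp c ▸ ht⟩, (opp_opp c).symm⟩
    rw [dh_opp] at hh
    simp [d.reflectE_of_ne hh, d.reflectArrow_opp_apply hi, kernelProj_apply_eq_e]
  · rw [d.reflectE_of_ne hh, d.reflectArrow_of_ne hh ht, LinearMap.prodMap_mul, d.e_mul_arrow,
      zero_mul]

variable {i} in
theorem reflectArrow_mul_reflectE (hi : Q.Loopfree i) (hl : l i ≠ 0) (c : Q.DA) :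
    d.reflectArrow i c * d.reflectE i (Q.dt c) = d.reflectArrow i c := by
  by_cases hh : Q.dh c = i
  · refine LinearMap.ext fun v => ?_
    lift c to Q.InArrow i using hh
    simp [d.reflectE_of_ne (hi.dt_ne c.2), reflectArrow_apply, kernelProj_single_e]
  by_cases ht : Q.dt c = i
  · refine LinearMap.ext fun v => ?_
    obtain ⟨b, rfl⟩ : ∃ b : Q.InArrow i, c = opp b :=
      ⟨⟨opp c, dh_opp c ▸ ht⟩, (opp_opp c).symm⟩
    have hidem := LinearMap.congr_fun (d.isIdempotentElem_kernelProj i hl) v.2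
    rw [Module.End.mul_apply] at hidem
    simp [ht, reflectE_self, d.reflectArrow_opp_apply hi, hidem]
  · rw [d.reflectE_of_ne ht, d.reflectArrow_of_ne hh ht, LinearMap.prodMap_mul, d.arrow_mul_e,
      zero_mul]

variable {i} in
theorem sum_reflectArrow_self (hi : Q.Loopfree i) (hl : l i ≠ 0) :
    ∑ b : Q.InArrow i, sign b.1 • (d.reflectArrow i b * d.reflectArrow i (opp b)) =
      -l i • d.reflectE i i := by
  refine LinearMap.ext fun v => ?_
  have hterm (b : Q.InArrow i) :
      (sign b.1 • (d.reflectArrow i b * d.reflectArrow i (opp b))) v =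
        (0, -l i • d.kernelProj i (Pi.single b (d.kernelProj i v.2 b))) := by
    have hsign : sign b.1 • Pi.single b (sign b.1 • d.kernelProj i v.2 b) =
        (Pi.single b (d.kernelProj i v.2 b) : Q.InArrow i → T) := by
      rw [← Pi.single_smul, smul_smul, sign_mul_self, one_smul]
    rw [LinearMap.smul_apply, Module.End.mul_apply, d.reflectArrow_opp_apply hi,
      reflectArrow_apply, Prod.smul_mk, smul_zero, smul_comm, ← map_zsmul, hsign]
  have hidem := LinearMap.congr_fun (d.isIdempotentElem_kernelProj i hl) v.2
  rw [Module.End.mul_apply] at hidem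
  rw [LinearMap.sum_apply, Finset.sum_congr rfl fun b _ => hterm b, reflectE_self]
  refine Prod.ext (by simp [Prod.fst_sum]) ?_
  rw [Prod.snd_sum, ← Finset.smul_sum, ← map_sum, Finset.univ_sum_single, hidem]
  rfl

variable {i} in
theorem sum_reflectArrow_of_ne (hi : Q.Loopfree i) (hl : l i ≠ 0) {j : Q.I} (hj : j ≠ i) :
    ∑ b : Q.InArrow j, sign b.1 • (d.reflectArrow i b * d.reflectArrow i (opp b)) =
      Q.coRefl K i l j • d.reflectE i j := by
  obtain ⟨φ, hφ⟩ : ∃ φ : End K T →ₗ[K] End K (T × (Q.InArrow i → T)),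
      ∀ f, LinearMap.prodMap f 0 = φ f :=
    ⟨LinearMap.prodMapLinear K T _ T _ K ∘ₗ LinearMap.inl K _ _, fun _ => rfl⟩
  have hterm (b : Q.InArrow j) :
      sign b.1 • (d.reflectArrow i b * d.reflectArrow i (opp b)) =
        φ (sign b.1 • (d.arrow b * d.arrow (opp b)) + (if Q.dt b = i then l i else 0) • d.e j) := by
    split_ifs with ht
    · let c : Q.InArrow i := ⟨opp b, dh_opp b.1 ▸ ht⟩
      have h := d.reflectArrow_opp_mul_reflectArrow hi hl c c
      simp only [c, opp_opp, if_true, dt_opp, sign_opp, b.2] at h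
      rw [h, hφ, ← map_zsmul, smul_sub, smul_smul, mul_neg, sign_mul_self, neg_one_smul,
        sub_neg_eq_add]
    · have hh : Q.dh b.1 ≠ i := fun h => hj (b.2 ▸ h)
      rw [d.reflectArrow_of_ne hh ht, d.reflectArrow_of_ne (by rwa [dh_opp]) (by rwa [dt_opp]),
        LinearMap.prodMap_mul, zero_mul, zero_smul, add_zero, map_zsmul, hφ]
  rw [Finset.sum_congr rfl fun b _ => hterm b, ← map_sum, Finset.sum_add_distrib, d.relation,
    ← Finset.sum_smul, ← add_smul, ← coRefl_apply_of_ne hj, map_smul, d.reflectE_of_ne hj, hφ]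

variable {i} in
/-- The reflection at `i` of a module over `Π^l`. -/
def reflect (hi : Q.Loopfree i) (hl : l i ≠ 0) :
    PreprojModule Q (Q.coRefl K i l) (T × (Q.InArrow i → T)) where
  e := d.reflectE i
  arrow := d.reflectArrow i
  orthogonal := ⟨d.isIdempotentElem_reflectE i hl, fun _ _ h => d.reflectE_mul_reflectE_of_ne i h⟩
  e_mul_arrow := d.reflectE_mul_reflectArrow hi hl
  arrow_mul_e := d.reflectArrow_mul_reflectE hi hl
  relation j := by
    rcases eq_or_ne j i with rfl | hj
    · rw [d.sum_reflectArrow_self hi hl, coRefl_self hi]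
    · exact d.sum_reflectArrow_of_ne hi hl hj

end Reflection

end PreprojModule

end FinQuiver

namespace FinQuiver

open Module

variable {Q : FinQuiver} {K : Type} [Field K] {l : Q.I → K} {i : Q.I}

namespace PreprojModule

variable {T S : Type} [AddCommGroup T] [Module K T] [AddCommGroup S] [Module K S]

section DimensionVector

variable [FiniteDimensional K T] (d : PreprojModule Q l T)

theorem finrank_range_neighbourProj :
    finrank K (d.neighbourProj i).range = ∑ b : Q.InArrow i, d.dimVec (Q.dt b) := by
  rw [neighbourProj, finrank_range_sum_of_orthogonalIdempotents (d.orthogonalIdempotents_block_e i)]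
  exact Finset.sum_congr rfl fun b _ =>
    finrank_range_block_self (W := fun _ => T) (d.orthogonal.idem (Q.dt b))

theorem finrank_range_kernelProj_add (hl : l i ≠ 0) :
    finrank K (d.kernelProj i).range + d.dimVec i = ∑ b : Q.InArrow i, d.dimVec (Q.dt b) := by
  have hN := d.isIdempotentElem_imageProj i hl
  have hrank : finrank K (d.imageProj i).range = d.dimVec i := by
    have hswap : d.fromNeighbours i ∘ₗ ((l i)⁻¹ • d.toNeighbours i) = d.e i := by
      rw [LinearMap.comp_smul, d.fromNeighbours_comp_toNeighbours, inv_smul_smul₀ hl]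
    rw [imageProj, ← LinearMap.smul_comp] at hN ⊢
    rw [finrank_range_comp_comm _ _ hN (hswap.symm ▸ d.orthogonal.idem i), hswap, dimVec]
  have hPN : d.kernelProj i * d.imageProj i = 0 := by
    rw [kernelProj, sub_mul, hN.eq, neighbourProj_mul_imageProj, sub_self]
  have hNP : d.imageProj i * d.kernelProj i = 0 := by
    rw [kernelProj, mul_sub, hN.eq, imageProj_mul_neighbourProj, sub_self]
  rw [← d.finrank_range_neighbourProj, ← hrank,
    ← finrank_range_add_of_orthogonal (d.isIdempotentElem_kernelProj i hl) hN hPN hNP, kernelProj,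
    sub_add_cancel]

theorem toZ_dimVec_reflect (hi : Q.Loopfree i) (hl : l i ≠ 0) :
    Q.toZ (d.reflect hi hl).dimVec = Q.refl i (Q.toZ d.dimVec) := by
  funext j
  rcases eq_or_ne j i with rfl | hj
  · have hrank : (d.reflect hi hl).dimVec j = finrank K (d.kernelProj j).range := by
      have hE : (d.reflect hi hl).e j =
          LinearMap.inr K T _ ∘ₗ d.kernelProj j ∘ₗ LinearMap.snd K T _ := d.reflectE_self j
      rw [dimVec, hE, finrank_range_comp_comp_of_comp_eq_id (d.isIdempotentElem_kernelProj j hl)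
        (LinearMap.snd_comp_inr ..)]
    simp only [refl_apply_self, toZ, hrank, eq_sub_iff_add_eq]
    exact_mod_cast d.finrank_range_kernelProj_add hl
  · have hE : (d.reflect hi hl).e j = LinearMap.inl K T _ ∘ₗ d.e j ∘ₗ LinearMap.fst K T _ :=
      d.reflectE_of_ne hj
    rw [refl_apply_of_ne hj, toZ, dimVec, hE, finrank_range_comp_comp_of_comp_eq_id
      (d.orthogonal.idem j) (LinearMap.fst_comp_inl ..)]
    rfl

end DimensionVector

end PreprojModule

end FinQuiver

namespace FinQuiver

open Module

variable {Q : FinQuiver} {K : Type} [Field K] {l : Q.I → K} {i : Q.I}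

namespace PreprojModule

variable {T S : Type} [AddCommGroup T] [Module K T] [AddCommGroup S] [Module K S]

section Corner

/-- Linear maps commuting with the action of the subalgebra of `Π^l` generated by the idempotents
of the vertices other than `i`, the arrows not incident with `i` and the paths of length two
through `i`. -/
structure IsCornerHom (d : PreprojModule Q l T) (s : PreprojModule Q l S) (i : Q.I)
    (F : T →ₗ[K] S) : Prop where
  comm_e : ∀ j ≠ i, ∀ v, F (d.e j v) = s.e j (F v)
  comm_arrow : ∀ c, Q.dh c ≠ i → Q.dt c ≠ i → ∀ v, F (d.arrow c v) = s.arrow c (F v)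
  comm_path : ∀ (b c : Q.InArrow i) (v),
    F (d.arrow (opp b) (d.arrow c v)) = s.arrow (opp b) (s.arrow c (F v))

variable {d : PreprojModule Q l T} {s : PreprojModule Q l S} {F : T →ₗ[K] S}

/-- The component at `i` of the extension of a corner homomorphism `F`; it is forced by
`l i • e i = ∑ sign b • b b*`. -/
def localExtension (d : PreprojModule Q l T) (s : PreprojModule Q l S) (i : Q.I)
    (F : T →ₗ[K] S) : T →ₗ[K] S :=
  (l i)⁻¹ • ∑ b : Q.InArrow i, sign b.1 • (s.arrow b ∘ₗ F ∘ₗ d.arrow (opp b))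

/-- The extension of a corner homomorphism `F` to a homomorphism of `Π^l`-modules. -/
def cornerExtension (d : PreprojModule Q l T) (s : PreprojModule Q l S) (i : Q.I)
    (F : T →ₗ[K] S) : T →ₗ[K] S :=
  F ∘ₗ (∑ j ∈ Finset.univ.erase i, d.e j) + localExtension d s i F

theorem localExtension_apply (v : T) : localExtension d s i F v =
    (l i)⁻¹ • ∑ b : Q.InArrow i, sign b.1 • s.arrow b (F (d.arrow (opp b) v)) := by
  simp [localExtension, LinearMap.sum_apply]

theorem localExtension_e_self (v : T) :
    localExtension d s i F (d.e i v) = localExtension d s i F v := by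
  have h (b : Q.InArrow i) := d.arrow_e_apply ((dt_opp b.1).trans b.2) v
  simp only [localExtension_apply, h]

theorem localExtension_e_of_ne {j : Q.I} (hj : j ≠ i) (v : T) :
    localExtension d s i F (d.e j v) = 0 := by
  have h (b : Q.InArrow i) : d.arrow (opp b) (d.e j v) = 0 :=
    d.arrow_e_apply_of_ne (by rw [dt_opp, b.2]; exact hj.symm) v
  simp [localExtension_apply, h]

theorem e_localExtension (v : T) :
    s.e i (localExtension d s i F v) = localExtension d s i F v := by
  have h (b : Q.InArrow i) (w : S) := s.e_arrow_apply b.2 w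
  simp only [localExtension_apply, map_smul, map_sum, map_zsmul, h]

theorem cornerExtension_e_self (v : T) :
    cornerExtension d s i F (d.e i v) = localExtension d s i F v := by
  have h : (∑ j ∈ Finset.univ.erase i, d.e j) (d.e i v) = 0 := by
    rw [LinearMap.sum_apply]
    exact Finset.sum_eq_zero fun j hj => d.e_e_apply_of_ne (Finset.ne_of_mem_erase hj) v
  rw [cornerExtension, LinearMap.add_apply, LinearMap.comp_apply, h, map_zero, zero_add,
    localExtension_e_self]

theorem cornerExtension_e_of_ne {j : Q.I} (hj : j ≠ i) (v : T) :
    cornerExtension d s i F (d.e j v) = F (d.e j v) := by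
  have h : (∑ j ∈ Finset.univ.erase i, d.e j) (d.e j v) = d.e j v := by
    rw [LinearMap.sum_apply, Finset.sum_eq_single_of_mem j (by simp [hj])
      fun k _ hk => d.e_e_apply_of_ne hk v, d.e_e_apply]
  rw [cornerExtension, LinearMap.add_apply, LinearMap.comp_apply, h, localExtension_e_of_ne hj,
    add_zero]

namespace IsCornerHom

theorem localExtension_arrow (hF : IsCornerHom d s i F) (hl : l i ≠ 0) (c : Q.InArrow i) (v : T) :
    localExtension d s i F (d.arrow c v) = s.arrow c (F v) := by
  simp only [localExtension_apply, hF.comm_path]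
  rw [sum_arrow_arrow_opp_apply, inv_smul_smul₀ hl, s.e_arrow_apply c.2]

theorem arrow_localExtension (hF : IsCornerHom d s i F) (hl : l i ≠ 0) (b : Q.InArrow i) (v : T) :
    s.arrow (opp b) (localExtension d s i F v) = F (d.arrow (opp b) v) := by
  have hsum : s.arrow (opp b) (localExtension d s i F v) = F (d.arrow (opp b)
      ((l i)⁻¹ • ∑ c : Q.InArrow i, sign c.1 • d.arrow c (d.arrow (opp c) v))) := by
    simp only [localExtension_apply, map_smul, map_sum, map_zsmul, hF.comm_path]
  rw [hsum, sum_arrow_arrow_opp_apply, inv_smul_smul₀ hl,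
    d.arrow_e_apply ((dt_opp b.1).trans b.2)]

theorem e_cornerExtension (hF : IsCornerHom d s i F) (j : Q.I) (v : T) :
    s.e j (cornerExtension d s i F v) = cornerExtension d s i F (d.e j v) := by
  rw [cornerExtension, LinearMap.add_apply, LinearMap.comp_apply, LinearMap.sum_apply, map_add,
    map_sum, map_sum, ← cornerExtension]
  rcases eq_or_ne j i with rfl | hj
  · have h : ∑ k ∈ Finset.univ.erase j, s.e j (F (d.e k v)) = 0 :=
      Finset.sum_eq_zero fun k hk => by
        rw [hF.comm_e k (Finset.ne_of_mem_erase hk),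
          s.e_e_apply_of_ne (Finset.ne_of_mem_erase hk).symm]
    rw [h, zero_add, e_localExtension, cornerExtension_e_self]
  · have h : ∑ k ∈ Finset.univ.erase i, s.e j (F (d.e k v)) = F (d.e j v) := by
      rw [Finset.sum_eq_single_of_mem j (by simp [hj]), ← hF.comm_e j hj, d.e_e_apply]
      intro k _ hk
      rw [← hF.comm_e j hj, d.e_e_apply_of_ne hk.symm, map_zero]
    rw [h, ← e_localExtension, s.e_e_apply_of_ne hj, add_zero, cornerExtension_e_of_ne hj]

theorem arrow_cornerExtension (hF : IsCornerHom d s i F) (hi : Q.Loopfree i) (hl : l i ≠ 0)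
    (c : Q.DA) (v : T) :
    s.arrow c (cornerExtension d s i F v) = cornerExtension d s i F (d.arrow c v) := by
  rw [← s.arrow_e_apply rfl, hF.e_cornerExtension, ← d.e_arrow_apply rfl]
  by_cases hh : Q.dh c = i
  · lift c to Q.InArrow i using hh
    rw [cornerExtension_e_of_ne (hi.dt_ne c.2), hF.comm_e _ (hi.dt_ne c.2), s.arrow_e_apply rfl,
      c.2, cornerExtension_e_self, hF.localExtension_arrow hl]
  rw [cornerExtension_e_of_ne hh, d.e_arrow_apply rfl]
  by_cases ht : Q.dt c = i
  · have hb := hF.arrow_localExtension hl ⟨opp c, dh_opp c ▸ ht⟩ v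
    rw [opp_opp] at hb
    rw [ht, cornerExtension_e_self, hb]
  · rw [cornerExtension_e_of_ne ht, hF.comm_e _ ht, s.arrow_e_apply rfl, hF.comm_arrow c hh ht]

theorem embeds (hF : IsCornerHom d s i F) (hi : Q.Loopfree i) (hl : l i ≠ 0)
    (hinj : ∀ j ≠ i, ∀ v, F (d.e j v) = 0 → d.e j v = 0) : d.Embeds s := by
  refine ⟨cornerExtension d s i F,
    ⟨fun j => LinearMap.ext fun v => (hF.e_cornerExtension j v).symm,
      fun c => LinearMap.ext fun v => (hF.arrow_cornerExtension hi hl c v).symm⟩,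
    fun j v hv => ?_⟩
  rcases eq_or_ne j i with rfl | hj
  · rw [cornerExtension_e_self] at hv
    have harrow (b : Q.InArrow j) : d.arrow (opp b) v = 0 := by
      have hb : Q.dh (opp b.1) ≠ j := dh_opp b.1 ▸ hi.dt_ne b.2
      rw [← d.e_arrow_apply (c := opp b.1) rfl]
      refine hinj _ hb _ ?_
      rw [d.e_arrow_apply rfl, ← hF.arrow_localExtension hl, hv, map_zero]
    have hsum := d.sum_arrow_arrow_opp_apply j v
    simp only [harrow, map_zero, smul_zero, Finset.sum_const_zero] at hsum
    exact (smul_eq_zero.mp hsum.symm).resolve_left hl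
  · exact hinj j hj v ((cornerExtension_e_of_ne hj v).symm.trans hv)

end IsCornerHom

theorem Embeds.of_reflect {hi : Q.Loopfree i} {hl : l i ≠ 0} :
    (d.reflect hi hl).Embeds (s.reflect hi hl) → d.Embeds s := by
  rintro ⟨F', hF', hinj⟩
  let F : T →ₗ[K] S := LinearMap.fst K S _ ∘ₗ F' ∘ₗ LinearMap.inl K T _
  have hprod {D : End K (T × (Q.InArrow i → T))} {E : End K (S × (Q.InArrow i → S))}
      {f : End K T} {g : End K S} (hD : D = LinearMap.prodMap f 0)
      (hE : E = LinearMap.prodMap g 0) (h : F' ∘ₗ D = E ∘ₗ F') (v : T) : F (f v) = g (F v) := by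
    subst hD hE
    exact congrArg Prod.fst (LinearMap.congr_fun h (v, 0))
  have he (j : Q.I) (hj : j ≠ i) (v : T) : F (d.e j v) = s.e j (F v) :=
    hprod (d.reflectE_of_ne hj) (s.reflectE_of_ne hj) (hF'.comm_e j) v
  refine IsCornerHom.embeds (F := F) ⟨he, fun c hh ht v => ?_, fun b c v => ?_⟩ hi hl
    fun j hj v hv => ?_
  · exact hprod (d.reflectArrow_of_ne hh ht) (s.reflectArrow_of_ne hh ht) (hF'.comm_arrow c) v
  · have hcomm : F' ∘ₗ (d.reflectArrow i (opp b) * d.reflectArrow i c) =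
        (s.reflectArrow i (opp b) * s.reflectArrow i c) ∘ₗ F' := LinearMap.ext fun w =>
      (LinearMap.congr_fun (hF'.comm_arrow (opp b)) (d.reflectArrow i c w)).trans
        (congrArg (s.reflectArrow i (opp b)) (LinearMap.congr_fun (hF'.comm_arrow c) w))
    have h := hprod (d.reflectArrow_opp_mul_reflectArrow hi hl b c)
      (s.reflectArrow_opp_mul_reflectArrow hi hl b c) hcomm v
    split_ifs at h
    · simpa [he _ (hi.dt_ne b.2)] using h
    · simpa using h
  · have heq : (d.reflect hi hl).e j (v, 0) = (d.e j v, 0) :=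
      LinearMap.congr_fun (d.reflectE_of_ne hj) (v, 0)
    have hsnd : (F' (d.e j v, 0)).2 = 0 := by
      rw [← heq]
      exact congrArg Prod.snd ((LinearMap.congr_fun (hF'.comm_e j) (v, 0)).trans
        (LinearMap.congr_fun (s.reflectE_of_ne hj) (F' (v, 0))))
    have hzero := hinj j (v, 0)
    rw [heq] at hzero
    exact congrArg Prod.fst (hzero (Prod.ext hv hsnd))

end Corner

end PreprojModule

end FinQuiver

/-! ### Uniqueness of modules under reflection -/

namespace FinQuiver

variable {Q : FinQuiver} {K : Type} [Field K] {l : Q.I → K} {i : Q.I} {α α' : Q.I → ℕ}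

/-- There is exactly one `Π^l`-module of dimension vector `α` up to isomorphism. -/
def HasUniqueModule (l : Q.I → K) (α : Q.I → ℕ) : Prop :=
  (Q.MomentFiber K l α).Nonempty ∧
    ∀ (x y : Q.Rep K α) (hx : x ∈ Q.MomentFiber K l α) (hy : y ∈ Q.MomentFiber K l α),
      (moduleOf x hx).Embeds (moduleOf y hy)

theorem HasUniqueModule.exists_glAct_eq (h : HasUniqueModule l α) {x y : Q.Rep K α}
    (hx : x ∈ Q.MomentFiber K l α) (hy : y ∈ Q.MomentFiber K l α) :
    ∃ g, y = Q.glAct K α g x :=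
  exists_glAct_eq_of_embeds (h.2 x y hx hy)

theorem zero_mem_momentFiber_evN (h : l i = 0) : (fun _ => 0) ∈ Q.MomentFiber K l (Q.evN i) := by
  intro j
  by_cases hj : j = i
  · subst hj
    simp [moment, h]
  · have : IsEmpty (Fin (Q.evN i j)) := by
      rw [evN, if_neg hj]
      infer_instance
    exact Subsingleton.elim _ _

theorem Loopfree.subsingleton_rep_evN (hi : Q.Loopfree i) (K : Type) :
    Subsingleton (Q.Rep K (Q.evN i)) := by
  refine ⟨fun x y => funext fun c => Matrix.ext fun r s => ?_⟩
  have hh : Q.dh c = i := by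
    by_contra h
    exact (Fin.cast (if_neg h) r).elim0
  exact (Fin.cast (if_neg (hi.dt_ne hh)) s).elim0

theorem hasUniqueModule_evN (hi : Q.Loopfree i) (h : l i = 0) :
    HasUniqueModule l (Q.evN i) := by
  have := hi.subsingleton_rep_evN K
  refine ⟨⟨_, zero_mem_momentFiber_evN h⟩, fun x y hx hy => ?_⟩
  obtain rfl := Subsingleton.elim x y
  exact ⟨LinearMap.id, ⟨fun _ => rfl, fun _ => rfl⟩, fun _ _ hv => hv⟩

theorem exists_momentFiber_refl (hi : Q.Loopfree i) (hl : l i ≠ 0)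
    (h : (Q.MomentFiber K l α).Nonempty) : ∃ α', Q.toZ α' = Q.refl i (Q.toZ α) ∧
      (Q.MomentFiber K (Q.coRefl K i l) α').Nonempty := by
  obtain ⟨x, hx⟩ := h
  obtain ⟨x', hx', -⟩ := ((moduleOf x hx).reflect hi hl).exists_moduleOf_embeds rfl
  refine ⟨_, ?_, x', hx'⟩
  rw [PreprojModule.toZ_dimVec_reflect, dimVec_moduleOf]

theorem HasUniqueModule.of_refl (hi : Q.Loopfree i) (hl : l i ≠ 0)
    (hα : Q.toZ α' = Q.refl i (Q.toZ α)) (h : HasUniqueModule (Q.coRefl K i l) α') :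
    HasUniqueModule l α := by
  refine ⟨?_, fun x y hx hy => ?_⟩
  · have hl' : Q.coRefl K i l i ≠ 0 := by rwa [coRefl_self hi, neg_ne_zero]
    obtain ⟨α'', hα'', hne⟩ := exists_momentFiber_refl hi hl' h.1
    rw [hα, refl_refl hi] at hα''
    rwa [toZ_injective hα'', coRefl_coRefl hi] at hne
  · have hdim {z : Q.Rep K α} (hz : z ∈ Q.MomentFiber K l α) :
        ((moduleOf z hz).reflect hi hl).dimVec = α' :=
      toZ_injective (by rw [PreprojModule.toZ_dimVec_reflect, dimVec_moduleOf, hα])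
    obtain ⟨x', hx', -, hxx'⟩ := PreprojModule.exists_moduleOf_embeds _ (hdim hx)
    obtain ⟨y', hy', hy'y, -⟩ := PreprojModule.exists_moduleOf_embeds _ (hdim hy)
    exact PreprojModule.Embeds.of_reflect ((hxx'.trans (h.2 x' y' hx' hy')).trans hy'y)

end FinQuiver

/-! ### Real roots -/

namespace FinQuiver

variable {Q : FinQuiver} {i : Q.I} {γ δ : Q.I → ℤ}

variable (Q) in
/-- Real roots: the roots `γ` with `p(γ) = 0`, encoded as `(γ,γ) = 2`. -/
structure IsRealRoot (γ : Q.I → ℤ) : Prop where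
  isRoot : Q.IsRoot γ
  bil_self : Q.bil γ γ = 2

theorem pp_eq_zero_iff : Q.pp γ = 0 ↔ Q.bil γ γ = 2 := by
  have h := two_mul_pp γ
  omega

theorem IsRealRoot.ne_zero (hγ : Q.IsRealRoot γ) : γ ≠ 0 := by
  rintro rfl
  simpa [bil] using hγ.bil_self

theorem IsRealRoot.refl (hγ : Q.IsRealRoot γ) (hi : Q.Loopfree i) :
    Q.IsRealRoot (Q.refl i γ) :=
  ⟨hγ.isRoot.reflect i hi γ, (bil_refl hi γ).trans hγ.bil_self⟩

theorem Loopfree.isRealRoot_ev (hi : Q.Loopfree i) : Q.IsRealRoot (Q.ev i) :=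
  ⟨.simple i hi, bil_ev_self hi⟩

@[elab_as_elim]
theorem IsRealRoot.induction {P : ∀ γ, Q.IsRealRoot γ → Prop}
    (ev : ∀ i (hi : Q.Loopfree i), P (Q.ev i) hi.isRealRoot_ev)
    (refl : ∀ i (hi : Q.Loopfree i) γ (hγ : Q.IsRealRoot γ), P γ hγ → P (Q.refl i γ) (hγ.refl hi))
    (hγ : Q.IsRealRoot γ) : P γ hγ := by
  obtain ⟨hroot, hγ⟩ := hγ
  induction hroot with
  | simple i hi => exact ev i hi
  | fund γ hf => linarith [bil_self_nonpos hf.2.1 hf.2.2.2]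
  | neg_fund γ hf =>
    have h : Q.bil (-γ) (-γ) = Q.bil γ γ := by
      simp only [← bilForm_apply, map_neg, LinearMap.neg_apply, neg_neg]
    linarith [bil_self_nonpos hf.2.1 hf.2.2.2]
  | reflect i hi γ hroot ih =>
    rw [bil_refl hi] at hγ
    exact refl i hi γ ⟨hroot, hγ⟩ (ih hγ)

theorem IsRealRoot.eq_or_eq_neg_of_smul_eq_smul (hγ : Q.IsRealRoot γ) (hδ : Q.IsRealRoot δ)
    {m n : ℤ} (hm : m ≠ 0) (h : m • δ = n • γ) : δ = γ ∨ δ = -γ := by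
  have hsq : m * m = n * n := by
    have h' : Q.bil (m • δ) (m • δ) = Q.bil (n • γ) (n • γ) := by rw [h]
    simp only [← bilForm_apply, map_smul, LinearMap.smul_apply] at h'
    simp only [bilForm_apply, hγ.bil_self, hδ.bil_self, smul_eq_mul] at h'
    linarith
  rcases mul_self_eq_mul_self_iff.mp hsq with rfl | rfl
  · exact Or.inl (smul_right_injective _ hm h)
  · exact Or.inr (smul_right_injective _ hm (by simpa using h))

theorem exists_pair_eq_zero_imp_smul_eq_smul (γ : Q.I → ℤ) : ∃ l : Q.I → ℝ, Q.pair ℝ l γ = 0 ∧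
    ∀ δ, Q.pair ℝ l δ = 0 → ∀ i, γ i • δ = δ i • γ := by
  let toQ (δ : Q.I → ℤ) : Q.I → ℚ := fun i => δ i
  let V := (Q.I → ℚ) ⧸ (Submodule.span ℚ {toQ γ})
  obtain ⟨φ, hφ⟩ : ∃ φ : V →ₗ[ℚ] ℝ, Function.Injective φ := by
    refine Module.Free.exists_linearMap_injective_of_rank_lt ?_
    rw [Real.rank_rat_real]
    exact (Module.rank_lt_aleph0 ℚ V).trans Cardinal.aleph0_lt_continuum
  let l (i : Q.I) : ℝ := φ (Submodule.Quotient.mk (Pi.single i 1))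
  have hpair (δ : Q.I → ℤ) : Q.pair ℝ l δ = φ (Submodule.Quotient.mk (toQ δ)) := by
    have hδ : toQ δ = ∑ i, (δ i : ℚ) • Pi.single i (1 : ℚ) := by
      simpa [toQ] using pi_eq_sum_univ' (toQ δ)
    rw [hδ, ← Submodule.mkQ_apply, map_sum, map_sum]
    refine Finset.sum_congr rfl fun i _ => ?_
    rw [map_smul, map_smul, Rat.smul_def, mul_comm]
    norm_cast
  refine ⟨l, ?_, fun δ hδ i => funext fun j => ?_⟩
  · rw [hpair, (Submodule.Quotient.mk_eq_zero _).mpr (Submodule.mem_span_singleton_self _),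
      map_zero]
  · rw [hpair, map_eq_zero_iff φ hφ, Submodule.Quotient.mk_eq_zero,
      Submodule.mem_span_singleton] at hδ
    obtain ⟨c, hc⟩ := hδ
    have hcoord (k : Q.I) : (δ k : ℚ) = c * γ k := (congrFun hc k).symm
    have : (γ i * δ j : ℚ) = δ i * γ j := by rw [hcoord, hcoord]; ring
    exact_mod_cast this

variable {K : Type} [Field K] {l : Q.I → K}

/-- The real roots orthogonal to `l` are at most `γ` and `-γ`. -/
def IsGenericFor (l : Q.I → K) (γ : Q.I → ℤ) : Prop :=
  ∀ δ, Q.IsRealRoot δ → Q.pair K l δ = 0 → δ = γ ∨ δ = -γ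

theorem IsRealRoot.exists_isGenericFor (hγ : Q.IsRealRoot γ) :
    ∃ l : Q.I → ℝ, Q.pair ℝ l γ = 0 ∧ IsGenericFor l γ := by
  obtain ⟨l, hl, hgen⟩ := exists_pair_eq_zero_imp_smul_eq_smul γ
  obtain ⟨i, hi⟩ := Function.ne_iff.mp hγ.ne_zero
  exact ⟨l, hl, fun δ hδ hlδ => hγ.eq_or_eq_neg_of_smul_eq_smul hδ hi (hgen δ hlδ i)⟩

theorem IsGenericFor.coRefl (h : IsGenericFor l (Q.refl i γ)) (hi : Q.Loopfree i) :
    IsGenericFor (Q.coRefl K i l) γ := by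
  intro δ hδ hlδ
  rw [pair_coRefl] at hlδ
  have h' := h _ (hδ.refl hi) hlδ
  rw [← refl_neg] at h'
  have hinv : Function.Involutive (Q.refl i) := refl_refl hi
  rwa [hinv.injective.eq_iff, hinv.injective.eq_iff] at h'

theorem IsRealRoot.exists_momentFiber_nonempty (hγ : Q.IsRealRoot γ)
    (hl : Q.pair K l γ = 0) (hgen : IsGenericFor l γ) :
    ∃ α, (Q.MomentFiber K l α).Nonempty ∧ (Q.toZ α = γ ∨ Q.toZ α = -γ) := by
  have simple_case {i : Q.I} (hi : Q.Loopfree i) {l : Q.I → K} {γ} (hgen : IsGenericFor l γ)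
      (hli : l i = 0) : ∃ α, (Q.MomentFiber K l α).Nonempty ∧ (Q.toZ α = γ ∨ Q.toZ α = -γ) :=
    ⟨Q.evN i, ⟨_, zero_mem_momentFiber_evN hli⟩,
      toZ_evN i ▸ hgen _ hi.isRealRoot_ev ((pair_ev l i).trans hli)⟩
  induction hγ using IsRealRoot.induction generalizing l with
  | ev i hi => exact simple_case hi hgen (by rwa [pair_ev] at hl)
  | refl i hi γ _ ih =>
    by_cases hli : l i = 0
    · exact simple_case hi hgen hli
    obtain ⟨α, hne, hα⟩ := ih (by rwa [pair_coRefl]) (hgen.coRefl hi)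
    have hli' : Q.coRefl K i l i ≠ 0 := by rwa [coRefl_self hi, neg_ne_zero]
    obtain ⟨α', hα', hne'⟩ := exists_momentFiber_refl hi hli' hne
    rw [coRefl_coRefl hi] at hne'
    refine ⟨α', hne', ?_⟩
    rw [hα', ← refl_neg]
    exact hα.imp (congrArg _) (congrArg _)

-- A generic real weight orthogonal to `γ` has a module of dimension vector `γ` or `-γ`.
theorem IsRealRoot.nonneg_or_nonpos (hγ : Q.IsRealRoot γ) : 0 ≤ γ ∨ γ ≤ 0 := by
  obtain ⟨l, hl, hgen⟩ := hγ.exists_isGenericFor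
  obtain ⟨α, -, hα⟩ := hγ.exists_momentFiber_nonempty hl hgen
  have hnonneg : 0 ≤ Q.toZ α := fun i => Int.natCast_nonneg (α i)
  rcases hα with h | h
  · exact Or.inl (h ▸ hnonneg)
  · exact Or.inr (neg_nonneg.mp (h ▸ hnonneg))

theorem IsRealRoot.refl_nonneg (hγ : Q.IsRealRoot γ) (h0 : 0 ≤ γ) (hi : Q.Loopfree i)
    (hne : γ ≠ Q.ev i) : 0 ≤ Q.refl i γ := by
  refine (hγ.refl hi).nonneg_or_nonpos.resolve_right fun hneg => hne ?_
  have hsupp (j : Q.I) (hj : j ≠ i) : γ j = 0 :=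
    le_antisymm (refl_apply_of_ne hj γ ▸ hneg j) (h0 j)
  have hγi : γ = γ i • Q.ev i := by
    ext j
    by_cases hj : j = i <;> simp [ev, hj, hsupp]
  refine (hi.isRealRoot_ev.eq_or_eq_neg_of_smul_eq_smul hγ one_ne_zero
    (by rwa [one_smul])).resolve_right fun h => ?_
  simpa [h, ev] using h0 i

theorem IsRealRoot.exists_bil_ev_pos (hγ : Q.IsRealRoot γ) (h0 : 0 ≤ γ) :
    ∃ i, 0 < Q.bil γ (Q.ev i) := by
  by_contra! h
  linarith [hγ.bil_self, bil_self_nonpos h0 h]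

end FinQuiver

/-! ### Real roots in `Σ_λ` -/

namespace FinQuiver

variable {Q : FinQuiver} {K : Type} [Field K] {l : Q.I → K} {i : Q.I} {γ : Q.I → ℤ}

/-- The positive real roots `γ` with `λ·γ = 0`. -/
structure IsRealRplus (l : Q.I → K) (γ : Q.I → ℤ) : Prop extends Q.IsRealRoot γ where
  nonneg : 0 ≤ γ
  pair_eq_zero : Q.pair K l γ = 0

/-- The positive real roots `γ` with `λ·γ = 0` which are not a sum of two or more such roots.
This is the part of the condition `γ ∈ Σ_λ` that concerns real roots. -/
structure IsIndecomposable (l : Q.I → K) (γ : Q.I → ℤ) : Prop extends IsRealRplus l γ where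
  ne_sum : ∀ (n : ℕ) (δ : Fin n → (Q.I → ℤ)), 2 ≤ n → (∀ j, IsRealRplus l (δ j)) → γ ≠ ∑ j, δ j

theorem IsRealRplus.refl (hγ : IsRealRplus l γ) (hi : Q.Loopfree i) (hne : γ ≠ Q.ev i) :
    IsRealRplus (Q.coRefl K i l) (Q.refl i γ) where
  toIsRealRoot := hγ.toIsRealRoot.refl hi
  nonneg := hγ.toIsRealRoot.refl_nonneg hγ.nonneg hi hne
  pair_eq_zero := by rw [pair_coRefl, refl_refl hi, hγ.pair_eq_zero]

theorem IsRealRplus.refl_of_ne_zero (hγ : IsRealRplus l γ) (hi : Q.Loopfree i) (hl : l i ≠ 0) :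
    IsRealRplus (Q.coRefl K i l) (Q.refl i γ) := by
  refine hγ.refl hi ?_
  rintro rfl
  exact hl (pair_ev l i ▸ hγ.pair_eq_zero)

theorem IsIndecomposable.refl (hγ : IsIndecomposable l γ) (hi : Q.Loopfree i) (hl : l i ≠ 0) :
    IsIndecomposable (Q.coRefl K i l) (Q.refl i γ) where
  toIsRealRplus := hγ.toIsRealRplus.refl_of_ne_zero hi hl
  ne_sum n δ hn hδ hsum := by
    have hl' : Q.coRefl K i l i ≠ 0 := by rwa [coRefl_self hi, neg_ne_zero]
    refine hγ.ne_sum n (fun j => Q.refl i (δ j)) hn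
      (fun j => coRefl_coRefl hi l ▸ (hδ j).refl_of_ne_zero hi hl') ?_
    rw [← refl_refl hi γ, hsum]
    exact map_sum (reflHom i) δ Finset.univ

-- Otherwise `γ = s_i(γ) + m ε_i` with `m = (γ, ε_i)` decomposes `γ`.
theorem IsIndecomposable.eq_ev (hγ : IsIndecomposable l γ) (hi : Q.Loopfree i) (hl : l i = 0)
    (hpos : 0 < Q.bil γ (Q.ev i)) : γ = Q.ev i := by
  by_contra hne
  obtain ⟨m, hm⟩ := Int.eq_ofNat_of_zero_le hpos.le
  have hl' : Q.coRefl K i l = l := funext fun j => by rw [coRefl, hl, mul_zero, sub_zero]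
  have hrefl : IsRealRplus l (Q.refl i γ) := by
    simpa only [hl'] using hγ.toIsRealRplus.refl hi hne
  have hev : IsRealRplus l (Q.ev i) :=
    ⟨hi.isRealRoot_ev, fun j => by simp only [ev]; split <;> simp, (pair_ev l i).trans hl⟩
  refine hγ.ne_sum (m + 1) (Fin.cons (Q.refl i γ) fun _ => Q.ev i) (by omega)
    (Fin.cases hrefl fun _ => hev) ?_
  simp [Fin.sum_univ_succ, FinQuiver.refl, hm]

theorem isIndecomposable_of_mem_sigmaSet (hγ : γ ∈ Q.SigmaSet K l) (hp : Q.pp γ = 0) :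
    IsIndecomposable l γ where
  isRoot := hγ.1.1.1
  bil_self := pp_eq_zero_iff.mp hp
  nonneg := hγ.1.1.2.1
  pair_eq_zero := hγ.1.2
  ne_sum n δ hn hδ hsum := by
    have hlt := hγ.2 n δ hn
      (fun j => ⟨⟨(hδ j).isRoot, (hδ j).nonneg, (hδ j).ne_zero⟩, (hδ j).pair_eq_zero⟩) hsum
    rw [hp, Finset.sum_eq_zero fun j _ => pp_eq_zero_iff.mpr (hδ j).bil_self] at hlt
    exact hlt.false

theorem sum_refl (i : Q.I) (γ : Q.I → ℤ) : ∑ j, Q.refl i γ j = ∑ j, γ j - Q.bil γ (Q.ev i) := by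
  simp [refl, ev, Finset.sum_sub_distrib]

theorem IsIndecomposable.hasUniqueModule {β : Q.I → ℕ} (h : IsIndecomposable l (Q.toZ β)) :
    HasUniqueModule l β := by
  induction hn : ∑ i, β i using Nat.strong_induction_on generalizing l β with
  | _ n ih =>
  subst hn
  obtain ⟨i, hpos⟩ := h.exists_bil_ev_pos h.nonneg
  have hi := loopfree_of_bil_ev_pos h.nonneg hpos
  by_cases hl : l i = 0
  · obtain rfl : β = Q.evN i := toZ_injective ((h.eq_ev hi hl hpos).trans (toZ_evN i).symm)
    exact hasUniqueModule_evN hi hl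
  have h' := h.refl hi hl
  lift Q.refl i (Q.toZ β) to Q.I → ℕ using h'.nonneg with β' hβ'
  refine .of_refl hi hl hβ' (ih _ ?_ h' rfl)
  have hsum : ∑ j, Q.toZ β' j = ∑ j, Q.toZ β j - _ := hβ' ▸ sum_refl i (Q.toZ β)
  zify
  simp only [toZ] at hsum ⊢
  omega

end FinQuiver

theorem nonempty_algEquiv_of_forall_eq {R V : Type*} [CommSemiring R] {A : Subalgebra R (V → R)}
    (x₀ : V) (h : ∀ f ∈ A, ∀ x, f x = f x₀) : Nonempty (A ≃ₐ[R] R) := by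
  refine ⟨AlgEquiv.ofBijective ((Pi.evalAlgHom R (fun _ => R) x₀).comp A.val) ⟨?_, ?_⟩⟩
  · intro f g hfg
    ext x
    rw [h f f.2, h g g.2]
    exact hfg
  · exact fun c => ⟨algebraMap R A c, rfl⟩

theorem FinQuiver.HasUniqueModule.nonempty_invRing_algEquiv {Q : FinQuiver} {K : Type} [Field K]
    {l : Q.I → K} {α : Q.I → ℕ} (h : Q.HasUniqueModule l α) :
    Nonempty (Q.InvRing K l α ≃ₐ[K] K) := by
  have hinv {f} (hf : f ∈ Q.InvRing K l α) (x y : Q.MomentFiber K l α) : f x = f y :=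
    (Algebra.mem_inf.mp hf).2 x y (h.exists_glAct_eq x.2 y.2)
  obtain ⟨x₀, hx₀⟩ := h.1
  exact nonempty_algEquiv_of_forall_eq ⟨x₀, hx₀⟩ fun f hf x => hinv hf x _

theorem stmt2_general (Q : FinQuiver) (K : Type) [Field K] (l : Q.I → K) (β : Q.I → ℕ)
    (hβ : Q.toZ β ∈ Q.SigmaSet K l) (hreal : Q.pp (Q.toZ β) = 0) :
    Nonempty (Q.InvRing K l β ≃ₐ[K] K) :=
  (FinQuiver.isIndecomposable_of_mem_sigmaSet hβ hreal).hasUniqueModule.nonempty_invRing_algEquiv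

/-- if `β` is a real root (`p(β) = 0`) in `Σ_λ` then `N(λ,β)` is a
single (reduced) point, i.e. its coordinate ring is `K`. -/
theorem stmt2 (Q : FinQuiver) (K : Type) [Field K] [CharZero K] [IsAlgClosed K]
    (l : Q.I → K) (β : Q.I → ℕ)
    (hβ : Q.toZ β ∈ Q.SigmaSet K l) (hreal : Q.pp (Q.toZ β) = 0) :
    Nonempty (Q.InvRing K l β ≃ₐ[K] K) :=
  stmt2_general Q K l β hβ hreal

end
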